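/- arXiv:1804.03514 — 2 statements merged into one kernel-verified Lean document; each statement's English description precedes it below -/
import Mathlib

section
/- Let q = 3. When d ≥ 3, the 3-state antiferromagnetic Potts model on the infinite d-ary tree has uniqueness for all β ∈ [(d−2)/(d+1), 1); that is, for every colour c ∈ [3], limsup_{n→∞} max_{τ:Λ_{d,n}→[3]} |Pr_{𝕋_{d,n}}[σ(v_{d,n}) = c ∣ σ(Λ_{d,n}) = τ] − 1/3| = 0. When d = 2, the same uniqueness conclusion holds for all β ∈ (0,1). -/
open Filter

/-- Weight of a configuration of the `q`-state Potts model with parameter `β`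
on the `d`-ary tree of height `n`.  A vertex of the tree is a pair of a depth
`k ≤ n` and a path of length `k`; the parent of a vertex of depth `k+1` is
obtained by dropping the last step of its path.  The weight is
`β ^ (number of monochromatic edges)`. -/
noncomputable def treeWeight (q d n : ℕ) (β : ℝ)
    (σ : (Σ k : Fin (n + 1), (Fin k → Fin d)) → Fin q) : ℝ :=
  β ^ (Finset.univ.filter (fun p : Σ k : Fin n, (Fin (k + 1) → Fin d) =>
        σ ⟨p.1.succ, p.2⟩ = σ ⟨p.1.castSucc, fun i => p.2 i.castSucc⟩)).card

/-- The conditional probability, under the Gibbs distribution of the `q`-state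
Potts model with parameter `β` on the `d`-ary tree `𝕋_{d,n}` of height `n`,
that the root receives colour `c` given that the leaves (the depth-`n`
vertices) are coloured according to `τ`. -/
noncomputable def condRootProb (q d n : ℕ) (β : ℝ)
    (τ : (Fin n → Fin d) → Fin q) (c : Fin q) : ℝ :=
  (∑ σ ∈ Finset.univ.filter
      (fun σ : (Σ k : Fin (n + 1), (Fin k → Fin d)) → Fin q =>
        σ ⟨⟨0, n.succ_pos⟩, Fin.elim0⟩ = c ∧
          ∀ f : Fin n → Fin d, σ ⟨⟨n, n.lt_succ_self⟩, f⟩ = τ f),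
      treeWeight q d n β σ) /
  (∑ σ ∈ Finset.univ.filter
      (fun σ : (Σ k : Fin (n + 1), (Fin k → Fin d)) → Fin q =>
        ∀ f : Fin n → Fin d, σ ⟨⟨n, n.lt_succ_self⟩, f⟩ = τ f),
      treeWeight q d n β σ)

/-- `γ(q,β,d,n)`: the maximum, over boundary configurations `τ` and colours
`c₁, c₂`, of the ratio of conditional root marginals. -/
noncomputable def pottsGamma (q d : ℕ) (β : ℝ) (n : ℕ) : ℝ :=
  ⨆ τ : (Fin n → Fin d) → Fin q, ⨆ c₁ : Fin q, ⨆ c₂ : Fin q,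
    condRootProb q d n β τ c₁ / condRootProb q d n β τ c₂

/-- The function `g_{c₁,c₂,β}` of the two-step recursion. -/
noncomputable def gfun (q d : ℕ) (β : ℝ) (c₁ c₂ : Fin q) (p : Fin d → Fin q → ℝ) : ℝ :=
  ∏ k : Fin d,
    (1 - ((1 - β) * (p k c₁ - p k c₂)) /
      (β * p k c₂ + ∑ c ∈ Finset.univ.erase c₂, p k c))

/-- The function `h_{c₁,c₂,β}` of the two-step recursion. -/
noncomputable def hfun (q d : ℕ) (β : ℝ) (c₁ c₂ : Fin q) (p : Fin d → Fin q → ℝ) : ℝ :=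
  1 + ((1 - β) * (1 - gfun q d β c₁ c₂ p)) /
    (β + ∑ c ∈ Finset.univ.erase c₂, gfun q d β c c₂ p)

/-- `Δ_α`: probability vectors on `q` colours whose entries are within a
factor `α` of each other. -/
def simplexAlpha (q : ℕ) (α : ℝ) : Set (Fin q → ℝ) :=
  {p | (∀ i, 0 ≤ p i) ∧ (∑ i, p i) = 1 ∧ ∀ i j, p i ≤ α * p j}

/-- `M_{α,c₁,c₂,β}`: the maximum of `h_{c₁,c₂,β}` over `Δ_α^d`. -/
noncomputable def Mval (q d : ℕ) (α β : ℝ) (c₁ c₂ : Fin q) : ℝ :=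
  sSup ((hfun q d β c₁ c₂) '' {p | ∀ k, p k ∈ simplexAlpha q α})

/-- `Ex_c(α)`: vectors with entries in `{1, α}`, whose `c`-entry is `1`
and with at least one entry equal to `α`. -/
def exSet (q : ℕ) (c : Fin q) (α : ℝ) : Set (Fin q → ℝ) :=
  {p | (∀ c', p c' = 1 ∨ p c' = α) ∧ p c = 1 ∧ ∃ c', p c' = α}

/-- The function `f_u(d,β,x,y)` from the one-step analysis. -/
noncomputable def fU (d : ℕ) (β x y : ℝ) : ℝ :=
  (1 - (1 - β) * y) ^ d /
    ((1 - (1 - β) * y) ^ d +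
      2 * (1 - (1 - β) * x) ^ ((d : ℝ) / 2) *
        (1 - (1 - β) * (1 - x - y)) ^ ((d : ℝ) / 2))

/-- The function `f_ℓ(d,β,x,y)` from the one-step analysis. -/
noncomputable def fL (d : ℕ) (β x y : ℝ) : ℝ :=
  (1 - (1 - β) * x) ^ d /
    ((1 - (1 - β) * x) ^ d + (1 - (1 - β) * y) ^ d +
      (1 - (1 - β) * (1 - x - y)) ^ d)

/-- The pair of sequences `(u_n(d,β), ℓ_n(d,β))`, defined by
`u_0 = 1`, `ℓ_0 = 0`, `u_{n+1} = f_u(d,β,u_n,ℓ_n)`, `ℓ_{n+1} = f_ℓ(d,β,u_n,ℓ_n)`. -/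
noncomputable def ulSeq (d : ℕ) (β : ℝ) : ℕ → ℝ × ℝ
  | 0 => (1, 0)
  | n + 1 =>
      (fU d β (ulSeq d β n).1 (ulSeq d β n).2,
       fL d β (ulSeq d β n).1 (ulSeq d β n).2)


/-!
The vector of conditional root probabilities of a tree is obtained from those of its `d` subtrees
by `p c ∝ ∏ j, (1 - b * p j c)` with `b = 1 - β`. Call a vector `T`-balanced if
`p i - p j ≤ T * (p i + p j)` for all `i` and `j`. Two steps of the recursion turn `T`-balanced
vectors into `stepMap d (s T / d)`-balanced ones, for a function `s` with
`stepMap d (s T / d) < T` on a range `(0, T₀]`; hence if the vectors are eventually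
`T₀`-balanced, the infimum of their eventual balance constants is `0`.

For the two-step estimate, the ratio of two entries after two steps is controlled by a linear
functional of a product of vectors. Those vectors lie in the cone spanned by three extremal vectors,
so multilinearity leaves a polynomial inequality for products of extremal vectors.

One step gives some `T₀ < 1`, which suffices for `d ≥ 3`. For `d = 2` the estimate needs
`T₀ = 2 / 3`; there the best eventual bounds `L ≤ p c ≤ U` satisfy the inequalities `U ≤ fU` and
`fL ≤ L` of the one-step recursion, which force `U < 5 * L`.
-/
namespace PottsTree

section TreeRecursion

variable {q d n : ℕ} {β : ℝ}

/-- The vertices of the `d`-ary tree of height `n`, encoded as in `treeWeight`. -/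
abbrev Vertex (d n : ℕ) : Type := Σ k : Fin (n + 1), (Fin k → Fin d)

/-- The interaction of two neighbouring colours. -/
noncomputable def edgeWeight (β : ℝ) (x y : Fin q) : ℝ := if x = y then β else 1

/-- The colour of the root. -/
def rootColour (σ : Vertex d n → Fin q) : Fin q := σ ⟨0, Fin.elim0⟩

/-- The colours of the leaves. -/
def leafColouring (σ : Vertex d n → Fin q) : (Fin n → Fin d) → Fin q :=
  fun f => σ ⟨Fin.last n, f⟩

/-- The restriction of a configuration to the `j`-th subtree of the root. -/
def branch (σ : Vertex d (n + 1) → Fin q) (j : Fin d) : Vertex d n → Fin q :=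
  fun v => σ ⟨v.1.succ, Fin.cons (α := fun _ => Fin d) j v.2⟩

/-- The boundary condition induced on the `j`-th subtree of the root. -/
def subBoundary (τ : (Fin (n + 1) → Fin d) → Fin q) (j : Fin d) : (Fin n → Fin d) → Fin q :=
  fun f => τ (Fin.cons (α := fun _ => Fin d) j f)

/-- The configuration with root colour `c` and configuration `s j` on the `j`-th subtree. -/
def glue (c : Fin q) (s : Fin d → Vertex d n → Fin q) : Vertex d (n + 1) → Fin q
  | ⟨⟨0, _⟩, _⟩ => c
  | ⟨⟨k + 1, h⟩, f⟩ => s (f ⟨0, k.succ_pos⟩) ⟨⟨k, Nat.lt_of_succ_lt_succ h⟩, fun i => f i.succ⟩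

lemma glue_rootColour_branch (σ : Vertex d (n + 1) → Fin q) :
    glue (rootColour σ) (branch σ) = σ := by
  funext ⟨⟨k, hk⟩, f⟩
  cases k with
  | zero => exact congrArg (fun f => σ ⟨0, f⟩) (Subsingleton.elim (α := Fin 0 → Fin d) _ _)
  | succ k => exact congrArg (fun f => σ ⟨⟨k + 1, hk⟩, f⟩) (Fin.cons_self_tail f)

lemma leafColouring_eq_iff (σ : Vertex d (n + 1) → Fin q) (τ : (Fin (n + 1) → Fin d) → Fin q) :
    leafColouring σ = τ ↔ ∀ j, leafColouring (branch σ j) = subBoundary τ j := by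
  refine ⟨fun h j => h ▸ rfl, fun h => funext fun f => ?_⟩
  rw [← Fin.cons_self_tail f]
  exact congrFun (h (f 0)) (Fin.tail f)

lemma treeWeight_eq_prod (β : ℝ) (σ : Vertex d n → Fin q) :
    treeWeight q d n β σ = ∏ k : Fin n, ∏ f : Fin (k + 1) → Fin d,
      edgeWeight β (σ ⟨k.succ, f⟩) (σ ⟨k.castSucc, fun i => f i.castSucc⟩) := by
  unfold treeWeight edgeWeight
  rw [← Finset.prod_const, Finset.prod_filter, Fintype.prod_sigma]

lemma prod_pi_fin_succ {k : ℕ} (F : (Fin (k + 1) → Fin d) → ℝ) :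
    ∏ f, F f = ∏ j : Fin d, ∏ g : Fin k → Fin d, F (Fin.cons (α := fun _ => Fin d) j g) := by
  rw [← Fintype.prod_prod_type', ← (Fin.consEquiv (fun _ : Fin (k + 1) => Fin d)).prod_comp]
  rfl

lemma treeWeight_succ (β : ℝ) (σ : Vertex d (n + 1) → Fin q) :
    treeWeight q d (n + 1) β σ = ∏ j : Fin d,
      edgeWeight β (rootColour (branch σ j)) (rootColour σ) * treeWeight q d n β (branch σ j) := by
  rw [treeWeight_eq_prod, Fin.prod_univ_succ, Finset.prod_mul_distrib]
  congr 1
  · rw [prod_pi_fin_succ]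
    refine Finset.prod_congr rfl fun j _ => ?_
    change ∏ g : Fin 0 → Fin d, _ = _
    rw [Fintype.prod_unique]
    unfold rootColour branch
    congr 3
    exact Subsingleton.elim (α := Fin 0 → Fin d) _ _
  · simp_rw [treeWeight_eq_prod]
    rw [Finset.prod_comm]
    refine Finset.prod_congr rfl fun k _ => (prod_pi_fin_succ (k := k + 1) _).trans ?_
    refine Finset.prod_congr rfl fun j _ => Finset.prod_congr rfl fun g _ => ?_
    unfold branch
    congr 3
    funext i
    cases i using Fin.cases <;> rfl

/-- The total weight of the configurations with root colour `c` and leaf colours `τ`. -/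
noncomputable def rootWeight (β : ℝ) (τ : (Fin n → Fin d) → Fin q) (c : Fin q) : ℝ :=
  ∑ σ : Vertex d n → Fin q with rootColour σ = c ∧ leafColouring σ = τ, treeWeight q d n β σ

lemma sum_mul_rootWeight (β : ℝ) (g : Fin q → ℝ) (τ : (Fin n → Fin d) → Fin q) :
    ∑ c, g c * rootWeight β τ c =
      ∑ σ : Vertex d n → Fin q with leafColouring σ = τ,
        g (rootColour σ) * treeWeight q d n β σ := by
  rw [← Finset.sum_fiberwise _ rootColour]
  refine Finset.sum_congr rfl fun c _ => ?_
  rw [rootWeight, Finset.mul_sum, Finset.filter_filter]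
  refine Finset.sum_congr (by simp only [and_comm]) fun σ hσ => ?_
  rw [(Finset.mem_filter.1 hσ).2.2]

lemma condRootProb_eq (β : ℝ) (τ : (Fin n → Fin d) → Fin q) (c : Fin q) :
    condRootProb q d n β τ c = rootWeight β τ c / ∑ c', rootWeight β τ c' := by
  have htotal := sum_mul_rootWeight β (fun _ => 1) τ
  simp only [one_mul] at htotal
  rw [htotal]
  unfold condRootProb rootWeight leafColouring
  simp only [funext_iff]
  rfl

lemma rootWeight_succ (β : ℝ) (τ : (Fin (n + 1) → Fin d) → Fin q) (c : Fin q) :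
    rootWeight β τ c =
      ∏ j : Fin d, ∑ c', edgeWeight β c' c * rootWeight β (subBoundary τ j) c' := by
  simp only [sum_mul_rootWeight β fun c' => edgeWeight β c' c]
  rw [Finset.prod_univ_sum]
  refine Finset.sum_nbij' branch (glue c) ?_ ?_ ?_ (fun _ _ => rfl) ?_
  · intro σ hσ
    simpa only [Fintype.mem_piFinset, Finset.mem_filter_univ]
      using (leafColouring_eq_iff σ τ).1 (Finset.mem_filter.1 hσ).2.2
  · intro s hs
    simp only [Fintype.mem_piFinset, Finset.mem_filter_univ] at hs
    exact (Finset.mem_filter_univ _).2 ⟨rfl, (leafColouring_eq_iff (glue c s) τ).2 hs⟩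
  · intro σ hσ
    obtain ⟨rfl, -⟩ := (Finset.mem_filter_univ _).1 hσ
    exact glue_rootColour_branch σ
  · intro σ hσ
    obtain ⟨rfl, -⟩ := (Finset.mem_filter_univ _).1 hσ
    exact treeWeight_succ β σ

lemma rootWeight_nonneg (hβ : 0 ≤ β) (τ : (Fin n → Fin d) → Fin q) (c : Fin q) :
    0 ≤ rootWeight β τ c :=
  Finset.sum_nonneg fun _ _ => pow_nonneg hβ _

lemma exists_leafColouring_eq [NeZero q] (τ : (Fin n → Fin d) → Fin q) :
    ∃ σ : Vertex d n → Fin q, leafColouring σ = τ :=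
  ⟨fun v => if h : n = v.1 then τ fun i => v.2 (Fin.cast h i) else 0, by
    funext f
    exact dif_pos rfl⟩

lemma sum_rootWeight_pos [NeZero q] (hβ : 0 < β) (τ : (Fin n → Fin d) → Fin q) :
    0 < ∑ c, rootWeight β τ c := by
  obtain ⟨σ, rfl⟩ := exists_leafColouring_eq τ
  refine Finset.sum_pos' (fun c _ => rootWeight_nonneg hβ.le _ c)
    ⟨rootColour σ, Finset.mem_univ _, Finset.sum_pos (fun _ _ => pow_pos hβ _) ⟨σ, ?_⟩⟩
  exact (Finset.mem_filter_univ _).2 ⟨rfl, rfl⟩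

lemma condRootProb_mem_stdSimplex [NeZero q] (hβ : 0 < β) (τ : (Fin n → Fin d) → Fin q) :
    condRootProb q d n β τ ∈ stdSimplex ℝ (Fin q) := by
  refine ⟨fun c => ?_, ?_⟩
  · rw [condRootProb_eq]
    exact div_nonneg (rootWeight_nonneg hβ.le _ _) (sum_rootWeight_pos hβ τ).le
  · simp_rw [condRootProb_eq]
    rw [← Finset.sum_div, div_self (sum_rootWeight_pos hβ τ).ne']

end TreeRecursion

section Messages

variable {ι κ : Type*} [Fintype κ] {b : ℝ}

/-- The unnormalised message at a vertex whose children `k : κ` send the messages `p k`;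
here `b` stands for `1 - β`. -/
noncomputable def message (b : ℝ) (p : κ → ι → ℝ) (c : ι) : ℝ :=
  ∏ k, (1 - b * p k c)

/-- The message at a vertex whose children `k : κ` send the messages `p k`. -/
noncomputable def normMessage [Fintype ι] (b : ℝ) (p : κ → ι → ℝ) (c : ι) : ℝ :=
  message b p c / ∑ c', message b p c'

lemma condRootProb_succ {q d n : ℕ} {β : ℝ} [NeZero q] (hβ : 0 < β)
    (τ : (Fin (n + 1) → Fin d) → Fin q) :
    condRootProb q d (n + 1) β τ =
      normMessage (1 - β) fun j => condRootProb q d n β (subBoundary τ j) := by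
  have hfactor (c : Fin q) : rootWeight β τ c =
      (∏ j, ∑ c', rootWeight β (subBoundary τ j) c') *
        message (1 - β) (fun j => condRootProb q d n β (subBoundary τ j)) c := by
    rw [rootWeight_succ, message, ← Finset.prod_mul_distrib]
    refine Finset.prod_congr rfl fun j _ => ?_
    have hS := sum_rootWeight_pos hβ (subBoundary τ j)
    have hedge (c' : Fin q) : edgeWeight β c' c * rootWeight β (subBoundary τ j) c' =
        rootWeight β (subBoundary τ j) c' -
          if c' = c then (1 - β) * rootWeight β (subBoundary τ j) c' else 0 := by
      unfold edgeWeight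
      split_ifs <;> ring
    rw [condRootProb_eq, mul_sub, mul_one, mul_left_comm, mul_div_cancel₀ _ hS.ne']
    simp_rw [hedge]
    rw [Finset.sum_sub_distrib, Finset.sum_ite_eq', if_pos (Finset.mem_univ c)]
  have hP : ∏ j : Fin d, ∑ c', rootWeight β (subBoundary τ j) c' ≠ 0 :=
    (Finset.prod_pos fun j _ => sum_rootWeight_pos hβ (subBoundary τ j)).ne'
  funext c
  rw [condRootProb_eq, normMessage]
  simp_rw [hfactor]
  rw [← Finset.mul_sum, mul_div_mul_left _ _ hP]

lemma message_pos [Fintype ι] {p : κ → ι → ℝ} (hb : b < 1) (hp : ∀ k, p k ∈ stdSimplex ℝ ι)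
    (c : ι) : 0 < message b p c := by
  refine Finset.prod_pos fun k _ => ?_
  obtain ⟨h0, h1⟩ := mem_Icc_of_mem_stdSimplex (hp k) c
  rcases h1.lt_or_eq with h1 | h1
  · nlinarith
  · linarith [congrArg (b * ·) h1]

lemma normMessage_mem_stdSimplex [Fintype ι] [Nonempty ι] {p : κ → ι → ℝ} (hb : b < 1)
    (hp : ∀ k, p k ∈ stdSimplex ℝ ι) : normMessage b p ∈ stdSimplex ℝ ι := by
  have hpos (c : ι) : 0 < message b p c := message_pos hb hp c
  have hsum : 0 < ∑ c, message b p c := Finset.sum_pos (fun c _ => hpos c) Finset.univ_nonempty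
  refine ⟨fun c => div_nonneg (hpos c).le hsum.le, ?_⟩
  simp only [normMessage]
  rw [← Finset.sum_div, div_self hsum.ne']

end Messages

section Balanced

variable {ι : Type*} {T : ℝ}

/-- The entries of `p` are within a factor `(1 + T) / (1 - T)` of each other. Parametrizing the
factor by `T` turns the one-step recursion into an addition formula for `artanh T`. -/
def Balanced (T : ℝ) (p : ι → ℝ) : Prop :=
  ∀ i j, p i - p j ≤ T * (p i + p j)

lemma Balanced.mono {T' : ℝ} {p : ι → ℝ} (h : Balanced T p) (hT : T ≤ T') (hp : 0 ≤ p) :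
    Balanced T' p := fun i j =>
  (h i j).trans (mul_le_mul_of_nonneg_right hT (add_nonneg (hp i) (hp j)))

lemma Balanced.comp {ι' : Type*} {p : ι → ℝ} (h : Balanced T p) (f : ι' → ι) :
    Balanced T (p ∘ f) := fun i j => h (f i) (f j)

/-- In the coordinate `artanh`, the map `t ↦ stepMap d t` is multiplication by `d`. It bounds the
balance of a vertex in terms of the ratios of the factors `1 - b * p k c` of its children. -/
noncomputable def stepMap (d : ℕ) (t : ℝ) : ℝ :=
  ((1 + t) ^ d - (1 - t) ^ d) / ((1 + t) ^ d + (1 - t) ^ d)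

variable {d : ℕ} {t : ℝ}

lemma stepMap_denom_pos (ht : 0 ≤ t) (ht1 : t < 1) : 0 < (1 + t) ^ d + (1 - t) ^ d :=
  add_pos (pow_pos (by linarith) d) (pow_pos (by linarith) d)

lemma stepMap_nonneg (ht : 0 ≤ t) (ht1 : t < 1) : 0 ≤ stepMap d t :=
  div_nonneg (sub_nonneg.2 <| pow_le_pow_left₀ (by linarith) (by linarith) d)
    (stepMap_denom_pos ht ht1).le

lemma stepMap_lt_one (ht : 0 ≤ t) (ht1 : t < 1) : stepMap d t < 1 := by
  rw [stepMap, div_lt_one (stepMap_denom_pos ht ht1)]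
  linarith [pow_pos (sub_pos.2 ht1) d]

lemma continuousAt_stepMap (ht : 0 ≤ t) (ht1 : t < 1) : ContinuousAt (stepMap d) t :=
  ContinuousAt.div (by fun_prop) (by fun_prop) (stepMap_denom_pos ht ht1).ne'

lemma balanced_normMessage_of_ratio [Fintype ι] {b : ℝ} {p : Fin d → ι → ℝ}
    (hb : b < 1) (ht : 0 ≤ t) (ht1 : t < 1) (hp : ∀ k, p k ∈ stdSimplex ℝ ι)
    (h : ∀ k i j, i ≠ j → (1 - t) * (1 - b * p k i) ≤ (1 + t) * (1 - b * p k j)) :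
    Balanced (stepMap d t) (normMessage b p) := by
  intro i j
  have hm (c : ι) : 0 < message b p c := message_pos hb hp c
  have hmain : message b p i - message b p j ≤ stepMap d t * (message b p i + message b p j) := by
    rcases eq_or_ne i j with rfl | hij
    · simpa only [sub_self] using
        mul_nonneg (stepMap_nonneg ht ht1) (add_pos (hm i) (hm i)).le
    have hprod : (1 - t) ^ d * message b p i ≤ (1 + t) ^ d * message b p j := by
      rw [message, message, ← Fin.prod_const, ← Fin.prod_const, ← Finset.prod_mul_distrib,
        ← Finset.prod_mul_distrib]
      refine Finset.prod_le_prod (fun k _ => mul_nonneg (by linarith) ?_) fun k _ => h k i j hij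
      obtain ⟨h0, h1⟩ := mem_Icc_of_mem_stdSimplex (hp k) i
      nlinarith
    rw [stepMap, div_mul_eq_mul_div, le_div_iff₀ (stepMap_denom_pos ht ht1)]
    linarith
  unfold normMessage
  rw [← sub_div, ← add_div, ← mul_div_assoc]
  exact div_le_div_of_nonneg_right hmain (Finset.sum_nonneg fun c _ => (hm c).le)

end Balanced

section Cone

variable {b b' T : ℝ}

/-- The factors `1 - b * p i`, up to a positive scalar, at three vertices `p` of the polytope of
`T`-balanced probability vectors. -/
def extremal (b T : ℝ) : Fin 3 → Fin 3 → ℝ :=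
  ![![3 - b - T - b * T, 3 - b - T + b * T, 3 - b - T + b * T],
    ![3 - b + T - b * T, 3 - b + T + b * T, 3 - b + T - b * T],
    ![3 - b - T + b * T, 3 - b - T + b * T, 3 - b - T - b * T]]

lemma extremal_nonneg (hb : 0 ≤ b) (hb1 : b ≤ 1) (hT : 0 ≤ T) (hT1 : T ≤ 1) (i : Fin 3) :
    0 ≤ extremal b T i := by
  have h0 : 0 ≤ b * T := mul_nonneg hb hT
  have h1 : b * T ≤ 1 := mul_le_one₀ hb1 hT hT1
  intro j
  fin_cases i <;> fin_cases j <;>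
    simp only [extremal, Pi.zero_apply, Fin.zero_eta, Fin.mk_one, Fin.reduceFinMk,
      Matrix.cons_val] <;> linarith

/-- The solution `v = y / a`, `u = (r - v * (M + 2 * T)) / M` of the two equations. -/
lemma exists_cone_weights {M a r x y : ℝ} (hM : 0 < M) (ha : 0 < a) (hy : 0 ≤ y)
    (hyx : y ≤ x) (h : x * M + 2 * T * y ≤ a * r) :
    ∃ u v : ℝ, 0 ≤ u ∧ 0 ≤ v ∧ u * M + v * (M + 2 * T) = r ∧ a * v = y ∧ x ≤ a * (u + v) := by
  set v := y / a
  have hav : a * v = y := mul_div_cancel₀ y ha.ne'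
  have hu0 : 0 ≤ r - v * (M + 2 * T) := by
    have : y * (M + 2 * T) ≤ a * r := by nlinarith
    refine le_of_mul_le_mul_left ?_ ha
    linear_combination this + (M + 2 * T) * hav
  set u := (r - v * (M + 2 * T)) / M
  have huM : u * M = r - v * (M + 2 * T) := div_mul_cancel₀ _ hM.ne'
  refine ⟨u, v, div_nonneg hu0 hM.le, div_nonneg hy ha.le, by linarith, hav, ?_⟩
  refine le_of_mul_le_mul_right ?_ hM
  linear_combination h - a * huM + 2 * T * hav

lemma Balanced.max_sub_add_le {p : Fin 3 → ℝ} (hT : 0 ≤ T) (hp : 0 ≤ p) (h : Balanced T p) :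
    max (p 0 - p 1) 0 + T * max (p 2 - p 1) 0 ≤ T * (p 0 + p 2) := by
  have h01 := h 0 1
  have h02 := h 0 2
  have h0 : 0 ≤ T * p 0 := mul_nonneg hT (hp 0)
  have h1 : 0 ≤ T * p 1 := mul_nonneg hT (hp 1)
  have h2 : 0 ≤ T * p 2 := mul_nonneg hT (hp 2)
  rcases max_cases (p 0 - p 1) 0 with ⟨e, _⟩ | ⟨e, _⟩ <;>
    rcases max_cases (p 2 - p 1) 0 with ⟨e', _⟩ | ⟨e', _⟩ <;> rw [e, e'] <;> linarith

lemma Balanced.max_sub_mul_le {ι : Type*} {p : ι → ℝ} (hT : 0 ≤ T) (hp : 0 ≤ p)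
    (h : Balanced T p) (i j : ι) : max (p i - p j) 0 * (1 - T) ≤ 2 * T * p j := by
  have hij := h i j
  rcases max_cases (p i - p j) 0 with ⟨e, _⟩ | ⟨e, _⟩ <;> rw [e]
  · linarith
  · linarith [mul_nonneg hT (hp j)]

lemma exists_cone_of_max_sub_le {p : Fin 3 → ℝ} (hb : 0 < b) (hb1 : b ≤ 1) (hb' : 0 ≤ b')
    (hbb : b' ≤ b) (hT : 0 < T) (hT1 : T ≤ 1) (hp : p ∈ stdSimplex ℝ (Fin 3))
    (hbal : Balanced T p) (hYX : max (p 2 - p 1) 0 ≤ max (p 0 - p 1) 0) :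
    ∃ u v : ℝ, 0 ≤ u ∧ 0 ≤ v ∧
      u * extremal b T 0 0 + v * extremal b T 1 0 ≤ 1 - b' * p 0 ∧
      u * extremal b T 0 1 + v * extremal b T 1 1 = 1 - b' * p 1 ∧
      u * extremal b T 0 2 + v * extremal b T 1 2 ≤ 1 - b' * p 2 := by
  have hsum : p 0 + p 1 + p 2 = 1 := by rw [← Fin.sum_univ_three, hp.2]
  have hsplit := hbal.max_sub_add_le hT.le hp.1
  have hratio := hbal.max_sub_mul_le hT.le hp.1 0 1
  have hX1 := le_max_left (p 0 - p 1) 0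
  have hY1 := le_max_left (p 2 - p 1) 0
  have hY0 := le_max_right (p 2 - p 1) 0
  set X := max (p 0 - p 1) 0
  set Y := max (p 2 - p 1) 0
  have hM : 0 < 3 - b - T + b * T := by nlinarith
  have hcrit : X * (3 - b - T + b * T) + 2 * T * Y ≤ 2 * T * (1 - b * p 1) := by
    have := mul_le_mul_of_nonneg_left hratio (sub_nonneg.2 hb1)
    linear_combination this + 2 * hsplit + 2 * T * hsum
  have hscaled : b' * X * (3 - b - T + b * T) + 2 * T * (b' * Y) ≤
      2 * b * T * (1 - b' * p 1) := by
    have := mul_le_mul_of_nonneg_left hcrit hb'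
    have := mul_le_mul_of_nonneg_right hbb (show 0 ≤ 2 * T by positivity)
    linarith
  obtain ⟨u, v, hu, hv, hr, hav, hx⟩ := exists_cone_weights hM (by positivity : 0 < 2 * b * T)
    (mul_nonneg hb' hY0) (mul_le_mul_of_nonneg_left hYX hb') hscaled
  have hX : b' * (p 0 - p 1) ≤ b' * X := mul_le_mul_of_nonneg_left hX1 hb'
  have hY : b' * (p 2 - p 1) ≤ b' * Y := mul_le_mul_of_nonneg_left hY1 hb'
  refine ⟨u, v, hu, hv, ?_, ?_, ?_⟩ <;> simp only [extremal, Matrix.cons_val] <;> linarith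

/-- Only the middle entry is matched exactly: this suffices since the functional `gap` below is
monotone in the two others, and it makes three of the six vertices of the polytope enough. -/
lemma exists_cone {p : Fin 3 → ℝ} (hb : 0 < b) (hb1 : b ≤ 1) (hb' : 0 ≤ b')
    (hbb : b' ≤ b) (hT : 0 < T) (hT1 : T ≤ 1) (hp : p ∈ stdSimplex ℝ (Fin 3))
    (hbal : Balanced T p) :
    ∃ W : Fin 3 → ℝ, 0 ≤ W ∧
      (∑ i, W i • extremal b T i) 0 ≤ 1 - b' * p 0 ∧
      (∑ i, W i • extremal b T i) 1 = 1 - b' * p 1 ∧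
      (∑ i, W i • extremal b T i) 2 ≤ 1 - b' * p 2 := by
  rcases le_total (max (p 2 - p 1) 0) (max (p 0 - p 1) 0) with h | h
  · obtain ⟨u, v, hu, hv, e₀, e₁, e₂⟩ :=
      exists_cone_of_max_sub_le hb hb1 hb' hbb hT hT1 hp hbal h
    refine ⟨![u, v, 0], ?_, ?_⟩
    · intro i
      fin_cases i <;> simp [hu, hv]
    · simpa [Fin.sum_univ_three] using ⟨e₀, e₁, e₂⟩
  · have hp' : p ∘ Equiv.swap 0 2 ∈ stdSimplex ℝ (Fin 3) :=
      ⟨fun i => hp.1 _, (Equiv.sum_comp _ p).trans hp.2⟩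
    obtain ⟨u, v, hu, hv, e₀, e₁, e₂⟩ :=
      exists_cone_of_max_sub_le hb hb1 hb' hbb hT hT1 hp' (hbal.comp _) h
    have hsum (j : Fin 3) : (∑ i, ![0, v, u] i • extremal b T i) j =
        u * extremal b T 0 (Equiv.swap 0 2 j) + v * extremal b T 1 (Equiv.swap 0 2 j) := by
      fin_cases j <;> simp [Fin.sum_univ_three, extremal, Equiv.swap_apply_def, add_comm]
    refine ⟨![0, v, u], ?_, ?_⟩
    · intro i
      fin_cases i <;> simp [hu, hv]
    · rw [hsum, hsum, hsum]
      exact ⟨e₂, e₁, e₀⟩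

end Cone

section TwoStep

variable {d : ℕ} {b b' s T : ℝ}

/-- A linear functional of `m` whose nonnegativity says that, after division by `∑ i, m i`, the
factors `1 - b * m i` at `i = 0, 1` have ratio at most `(1 + s / d) / (1 - s / d)`, for
`d * b = 3 - b`. -/
def gap (b s : ℝ) : (Fin 3 → ℝ) →ₗ[ℝ] ℝ where
  toFun m := s * ((2 - b) * (m 0 + m 1) + 2 * m 2) - (3 - b) * (m 1 - m 0)
  map_add' m m' := by
    simp only [Pi.add_apply]
    ring
  map_smul' c m := by
    simp only [Pi.smul_apply, smul_eq_mul, RingHom.id_apply]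
    ring

lemma gap_apply (b s : ℝ) (m : Fin 3 → ℝ) :
    gap b s m = s * ((2 - b) * (m 0 + m 1) + 2 * m 2) - (3 - b) * (m 1 - m 0) := rfl

lemma gap_le_gap {m m' : Fin 3 → ℝ} (hb : b ≤ 2) (hs : 0 ≤ s) (h₀ : m 0 ≤ m' 0)
    (h₁ : m 1 = m' 1) (h₂ : m 2 ≤ m' 2) : gap b s m ≤ gap b s m' := by
  have hs0 := mul_le_mul_of_nonneg_left h₀ (mul_nonneg hs (sub_nonneg.2 hb))
  have hb0 := mul_le_mul_of_nonneg_left h₀ (show 0 ≤ 3 - b by linarith)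
  have hs2 := mul_le_mul_of_nonneg_left h₂ hs
  rw [gap_apply, gap_apply, h₁]
  linarith

lemma map_prod_sum_nonneg {A ι κ : Type*} [CommRing A] [Algebra ℝ A] [Fintype ι] [Fintype κ]
    (F : A →ₗ[ℝ] ℝ) {e : ι → A} {W : κ → ι → ℝ} (hW : ∀ k, 0 ≤ W k)
    (hF : ∀ g : κ → ι, 0 ≤ F (∏ k, e (g k))) : 0 ≤ F (∏ k, ∑ i, W k i • e i) := by
  classical
  rw [Finset.prod_univ_sum, map_sum]
  refine Finset.sum_nonneg fun g _ => ?_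
  rw [Finset.prod_smul, map_smul]
  exact mul_nonneg (Finset.prod_nonneg fun k _ => hW k (g k)) (hF g)

/-- The inequality on products of extremal factors that drives the two-step contraction. -/
def ExtremalIneq (d : ℕ) (b T s : ℝ) : Prop :=
  ∀ g : Fin d → Fin 3, 0 ≤ gap b s (∏ k, extremal b T (g k))

lemma gap_message_nonneg {p : Fin d → Fin 3 → ℝ} (hb : 0 < b) (hb1 : b ≤ 1) (hb' : 0 ≤ b')
    (hbb : b' ≤ b) (hT : 0 < T) (hT1 : T ≤ 1) (hs : 0 ≤ s) (hE : ExtremalIneq d b T s)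
    (hp : ∀ k, p k ∈ stdSimplex ℝ (Fin 3)) (hbal : ∀ k, Balanced T (p k)) :
    0 ≤ gap b s (message b' p) := by
  choose W hW h₀ h₁ h₂ using fun k => exists_cone hb hb1 hb' hbb hT hT1 (hp k) (hbal k)
  have hnonneg (k : Fin d) (i : Fin 3) : 0 ≤ (∑ j, W k j • extremal b T j) i := by
    rw [Finset.sum_apply]
    exact Finset.sum_nonneg fun j _ =>
      mul_nonneg (hW k j) (extremal_nonneg hb.le hb1 hT.le hT1 j i)
  refine (map_prod_sum_nonneg (gap b s) hW hE).trans
    (gap_le_gap (by linarith) hs ?_ ?_ ?_) <;> rw [Finset.prod_apply]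
  · exact Finset.prod_le_prod (fun k _ => hnonneg k 0) fun k _ => h₀ k
  · exact Finset.prod_congr rfl fun k _ => h₁ k
  · exact Finset.prod_le_prod (fun k _ => hnonneg k 2) fun k _ => h₂ k

lemma ratio_le_of_gap_nonneg {m : Fin 3 → ℝ} {D : ℝ} (hD : 0 < D) (hbD : D * b = 3 - b)
    (hb' : 0 ≤ b') (hbb : b' ≤ b) (hs : 0 ≤ s) (hm : ∀ i, 0 < m i) (h : 0 ≤ gap b s m) :
    (1 - s / D) * (1 - b' * (m 0 / ∑ i, m i)) ≤ (1 + s / D) * (1 - b' * (m 1 / ∑ i, m i)) := by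
  have h0 := hm 0
  have h1 := hm 1
  have h2 := hm 2
  have hb : 0 < b := by nlinarith
  rw [gap_apply] at h
  rw [Fin.sum_univ_three]
  have hmono : b' * ((2 - b) * (m 0 + m 1) + 2 * m 2) ≤
      b * ((2 - b') * (m 0 + m 1) + 2 * m 2) := by
    nlinarith
  have hdiff : D * (b' * (m 1 - m 0)) ≤ s * ((2 - b') * (m 0 + m 1) + 2 * m 2) := by
    refine le_of_mul_le_mul_left ?_ hb
    linear_combination mul_le_mul_of_nonneg_left h hb' + mul_le_mul_of_nonneg_left hmono hs +
      b' * (m 1 - m 0) * hbD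
  have hfactor (x : ℝ) : 1 - b' * (x / (m 0 + m 1 + m 2)) =
      (m 0 + m 1 + m 2 - b' * x) / (m 0 + m 1 + m 2) := by
    field_simp
  rw [hfactor, hfactor, ← mul_div_assoc, ← mul_div_assoc]
  refine div_le_div_of_nonneg_right ?_ (by positivity)
  refine le_of_mul_le_mul_left ?_ hD
  have hsD : D * (s / D) = s := mul_div_cancel₀ s hD.ne'
  linear_combination hdiff - (2 * (m 0 + m 1 + m 2) - b' * (m 0 + m 1)) * hsD

lemma balanced_two_step {p : Fin d → Fin d → Fin 3 → ℝ} (hd : 0 < d) (hbd : d * b = 3 - b)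
    (hb1 : b ≤ 1) (hb' : 0 ≤ b') (hb1' : b' < 1) (hbb : b' ≤ b) (hT : 0 < T) (hT1 : T ≤ 1)
    (hs : 0 ≤ s) (hsd : s < d) (hE : ExtremalIneq d b T s)
    (hp : ∀ j k, p j k ∈ stdSimplex ℝ (Fin 3)) (hbal : ∀ j k, Balanced T (p j k)) :
    Balanced (stepMap d (s / d)) (normMessage b' fun j => normMessage b' (p j)) := by
  have hd' : (0 : ℝ) < d := Nat.cast_pos.2 hd
  have hb : 0 < b := by nlinarith
  refine balanced_normMessage_of_ratio hb1' (by positivity) ((div_lt_one hd').2 hsd)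
    (fun j => normMessage_mem_stdSimplex hb1' (hp j)) fun j c₁ c₂ hc => ?_
  obtain ⟨π, rfl, rfl⟩ : ∃ π : Equiv.Perm (Fin 3), π 0 = c₁ ∧ π 1 = c₂ := by
    revert c₁ c₂
    decide
  have hgap : 0 ≤ gap b s (message b' (p j) ∘ π) :=
    gap_message_nonneg (p := fun k => p j k ∘ π) hb hb1 hb' hbb hT hT1 hs hE
      (fun k => ⟨fun i => (hp j k).1 _, (Equiv.sum_comp π (p j k)).trans (hp j k).2⟩)
      fun k => (hbal j k).comp π
  have hratio := ratio_le_of_gap_nonneg hd' hbd hb' hbb hs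
    (fun i => message_pos hb1' (hp j) (π i)) hgap
  simpa only [normMessage, Function.comp_apply, Equiv.sum_comp π (message b' (p j))] using hratio

end TwoStep

section SmallDegree

lemma extremalIneq_two {T : ℝ} (hT : 0 ≤ T) (hT1 : T ≤ 2 / 3) : ExtremalIneq 2 1 T T := by
  intro g
  have h1 : 0 ≤ T * (2 / 3 - T) := mul_nonneg hT (by linarith)
  have h2 : 0 ≤ T ^ 3 := by positivity
  simp only [gap_apply, Fin.prod_univ_two, Pi.mul_apply]
  generalize g 0 = x
  generalize g 1 = y
  fin_cases x <;> fin_cases y <;>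
    simp only [extremal, Fin.zero_eta, Fin.mk_one, Fin.reduceFinMk, Matrix.cons_val] <;> linarith

lemma extremalIneq_three {T : ℝ} (hT : 0 ≤ T) (hT1 : T ≤ 1) :
    ExtremalIneq 3 (3 / 4) T (T + T ^ 3 / 4) := by
  intro g
  -- Each of the 27 inequalities is a nonnegative combination of these Bernstein polynomials.
  have : 0 ≤ 1 - T := by linarith
  have h0 : 0 ≤ T * (1 - T) ^ 6 := by positivity
  have h1 : 0 ≤ T ^ 2 * (1 - T) ^ 5 := by positivity
  have h2 : 0 ≤ T ^ 3 * (1 - T) ^ 4 := by positivity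
  have h3 : 0 ≤ T ^ 4 * (1 - T) ^ 3 := by positivity
  have h4 : 0 ≤ T ^ 5 * (1 - T) ^ 2 := by positivity
  have h5 : 0 ≤ T ^ 6 * (1 - T) := by positivity
  have h6 : 0 ≤ T ^ 7 := by positivity
  simp only [gap_apply, Fin.prod_univ_three, Pi.mul_apply]
  generalize g 0 = x
  generalize g 1 = y
  generalize g 2 = z
  fin_cases x <;> fin_cases y <;> fin_cases z <;>
    simp only [extremal, Fin.zero_eta, Fin.mk_one, Fin.reduceFinMk, Matrix.cons_val] <;> linarith

end SmallDegree

section LargeDegree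

variable {ι : Type*} {x : ι → ℝ}

lemma prod_one_sub_le_prod_one_add (hx : 0 ≤ x) (s : Finset ι) :
    ∏ i ∈ s, (1 - x i) ≤ ∏ i ∈ s, (1 + x i) := by
  refine (le_abs_self _).trans ?_
  rw [Finset.abs_prod]
  refine Finset.prod_le_prod (fun i _ => abs_nonneg _) fun i _ => abs_le.2 ?_
  have hi : 0 ≤ x i := hx i
  constructor <;> linarith

lemma two_le_prod_one_add_add_prod_one_sub (hx : 0 ≤ x) (s : Finset ι) :
    2 ≤ ∏ i ∈ s, (1 + x i) + ∏ i ∈ s, (1 - x i) := by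
  classical
  induction s using Finset.induction_on with
  | empty => norm_num
  | insert a s ha ih =>
    rw [Finset.prod_insert ha, Finset.prod_insert ha]
    linarith [mul_nonneg (hx a) (sub_nonneg.2 (prod_one_sub_le_prod_one_add hx s))]

lemma prod_one_add_sub_prod_one_sub_le (hx : 0 ≤ x) (s : Finset ι) :
    ∏ i ∈ s, (1 + x i) - ∏ i ∈ s, (1 - x i) ≤
      (∑ i ∈ s, x i) * (∏ i ∈ s, (1 + x i) + ∏ i ∈ s, (1 - x i)) := by
  classical
  induction s using Finset.induction_on with
  | empty => norm_num
  | insert a s ha ih =>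
    have hE : 0 ≤ x a + ∑ i ∈ s, x i := add_nonneg (hx a) (Finset.sum_nonneg fun i _ => hx i)
    have hD := mul_nonneg (hx a) (sub_nonneg.2 (prod_one_sub_le_prod_one_add hx s))
    rw [Finset.prod_insert ha, Finset.prod_insert ha, Finset.sum_insert ha]
    linarith [mul_nonneg hE hD]

lemma two_mul_prod_one_add_add_prod_one_sub_le (hx : 0 ≤ x) (s : Finset ι) :
    2 * (∏ i ∈ s, (1 + x i) + ∏ i ∈ s, (1 - x i) - 2) ≤
      (∑ i ∈ s, x i) * (∏ i ∈ s, (1 + x i) - ∏ i ∈ s, (1 - x i)) := by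
  classical
  induction s using Finset.induction_on with
  | empty => norm_num
  | insert a s ha ih =>
    have hD := mul_le_mul_of_nonneg_left (prod_one_add_sub_prod_one_sub_le hx s) (hx a)
    have hR := mul_nonneg (mul_self_nonneg (x a))
      (zero_le_two.trans (two_le_prod_one_add_add_prod_one_sub hx s))
    rw [Finset.prod_insert ha, Finset.prod_insert ha, Finset.sum_insert ha]
    linarith

lemma prod_one_add_sub_prod_one_sub_sub_le (hx : 0 ≤ x) (s : Finset ι) :
    ∏ i ∈ s, (1 + x i) - ∏ i ∈ s, (1 - x i) - 2 * ∑ i ∈ s, x i ≤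
      (∑ i ∈ s, x i) / 3 * (∏ i ∈ s, (1 + x i) + ∏ i ∈ s, (1 - x i) - 2) := by
  classical
  induction s using Finset.induction_on with
  | empty => norm_num
  | insert a s ha ih =>
    have hR := mul_le_mul_of_nonneg_left (two_mul_prod_one_add_add_prod_one_sub_le hx s) (hx a)
    have hD := mul_nonneg (mul_self_nonneg (x a))
      (sub_nonneg.2 (prod_one_sub_le_prod_one_add hx s))
    rw [Finset.prod_insert ha, Finset.prod_insert ha, Finset.sum_insert ha]
    linarith

lemma sum_le_of_card_mul_le [Fintype ι] [Nonempty ι] {K : ℝ}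
    (h : ∀ i, Fintype.card ι * x i ≤ K) : ∑ i, x i ≤ K := by
  have hcard : (0 : ℝ) < Fintype.card ι := Nat.cast_pos.2 Fintype.card_pos
  refine le_of_mul_le_mul_left ?_ hcard
  rw [Finset.mul_sum]
  simpa only [Finset.card_univ, nsmul_eq_mul] using
    Finset.sum_le_card_nsmul Finset.univ _ K fun i _ => h i

lemma sub_sq_div_two_le_log_one_add {u : ℝ} (hu : 0 ≤ u) : u - u ^ 2 / 2 ≤ Real.log (1 + u) := by
  refine le_trans ?_ (Real.le_log_one_add_of_nonneg hu)
  rw [le_div_iff₀ (by linarith)]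
  linarith [pow_nonneg hu 3]

lemma log_one_add_div_one_sub_le {s : ℝ} (hs : 0 ≤ s) (hs1 : s ^ 2 ≤ 1 / 5) :
    Real.log ((1 + s) / (1 - s)) ≤ 2 * s * (1 + s ^ 2 / (3 * (1 - s ^ 2))) := by
  have hseries := Real.log_div_le_sum_range_add hs (by nlinarith) 4
  have hs2 : 0 < 1 - s ^ 2 := by linarith
  have hremainder : s * (1 + s ^ 2 / (3 * (1 - s ^ 2))) -
      ((∑ i ∈ Finset.range 4, s ^ (2 * i + 1) / (2 * (i : ℝ) + 1)) +
        s ^ (2 * 4 + 1) / (1 - s ^ 2)) =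
      s ^ 5 * (1 / 3 - (1 - s ^ 2) * (1 / 5 + s ^ 2 / 7) - s ^ 4) / (1 - s ^ 2) := by
    simp only [Finset.sum_range_succ, Finset.sum_range_zero]
    field_simp
    push_cast
    ring
  have hfactor : 0 ≤ 1 / 3 - (1 - s ^ 2) * (1 / 5 + s ^ 2 / 7) - s ^ 4 := by
    nlinarith [sq_nonneg s]
  have hnonneg : 0 ≤
      s ^ 5 * (1 / 3 - (1 - s ^ 2) * (1 / 5 + s ^ 2 / 7) - s ^ 4) / (1 - s ^ 2) := by
    positivity
  linarith

section ChildBounds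

variable {d : ℕ} {b s t T u : ℝ}

lemma child_bound_left (hb : 0 < b) (hb1 : b ≤ 3 / 5) (hbd : d * b = 3 - b) (hT : 0 < T)
    (hT1 : T ≤ 1) (hs0 : 0 ≤ s) (hs : s * (3 - b - T) = b * T) :
    d * ((3 - b) * s / T - Real.log (1 + s)) ≤ 3 - b + 2 / 5 * T ^ 2 := by
  have hd : (0 : ℝ) ≤ d := d.cast_nonneg
  have hlin : (3 - b) * s / T = b + s := by
    rw [div_eq_iff hT.ne']
    linarith
  have hsq : d * s ^ 2 ≤ 4 / 5 * T ^ 2 := by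
    have hM : 7 / 5 ≤ 3 - b - T := by linarith
    have hds : d * s ^ 2 * (3 - b - T) ^ 2 = (3 - b) * b * T ^ 2 := by
      linear_combination d * (s * (3 - b - T) + b * T) * hs + b * T ^ 2 * hbd
    have h1 : (3 - b) * b ≤ 36 / 25 := by nlinarith
    have h2 : 36 / 25 ≤ 4 / 5 * (3 - b - T) ^ 2 := by nlinarith
    refine le_of_mul_le_mul_right ?_ (show 0 < (3 - b - T) ^ 2 by positivity)
    linarith [mul_le_mul_of_nonneg_left (h1.trans h2) (sq_nonneg T)]
  rw [hlin]
  linarith [mul_le_mul_of_nonneg_left (sub_sq_div_two_le_log_one_add hs0) hd]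

lemma child_bound_mid (hb : 0 < b) (hb1 : b ≤ 3 / 5) (hbd : d * b = 3 - b) (hT : 0 < T)
    (hT1 : T ≤ 1) (ht0 : 0 ≤ t) (ht : t * (3 - b + T) = b * T) :
    d * ((3 - b) * t / T - Real.log (1 - t)) ≤ 3 - b + 2 / 5 * T ^ 2 := by
  have hd : (0 : ℝ) ≤ d := d.cast_nonneg
  have hM : 12 / 5 ≤ 3 - b + T := by linarith
  have hlin : (3 - b) * t / T = b - t := by
    rw [div_eq_iff hT.ne']
    linarith
  have ht1 : t ≤ 1 / 4 := by nlinarith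
  have hsq : d * t ^ 2 ≤ 1 / 4 * T ^ 2 := by
    have hdt : d * t ^ 2 * (3 - b + T) ^ 2 = (3 - b) * b * T ^ 2 := by
      linear_combination d * (t * (3 - b + T) + b * T) * ht + b * T ^ 2 * hbd
    have h1 : (3 - b) * b ≤ 36 / 25 := by nlinarith
    have h2 : 36 / 25 ≤ 1 / 4 * (3 - b + T) ^ 2 := by nlinarith
    refine le_of_mul_le_mul_right ?_ (show 0 < (3 - b + T) ^ 2 by positivity)
    linarith [mul_le_mul_of_nonneg_left (h1.trans h2) (sq_nonneg T)]
  have hinv : (1 - t)⁻¹ ≤ 1 + t + 4 / 3 * t ^ 2 := by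
    rw [inv_le_iff_one_le_mul₀ (by linarith)]
    linarith [mul_nonneg (sq_nonneg t) (sub_nonneg.2 ht1)]
  have hlog : b - t - Real.log (1 - t) ≤ b + 4 / 3 * t ^ 2 := by
    linarith [Real.one_sub_inv_le_log_of_pos (show 0 < 1 - t by linarith)]
  rw [hlin]
  linarith [mul_le_mul_of_nonneg_left hlog hd, sq_nonneg T]

/-- The expansion of the difference in the Bernstein basis has nonnegative coefficients. -/
lemma child_polynomial_bound (hT : 0 ≤ T) (hT1 : T ≤ 1) (hu : u = T ^ 2 / 5 + 9 * T ^ 4 / 20) :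
    24 / 5 * T * ((3 / 2 - T) * (6 - T) + 3 / 16 * T ^ 2) ≤
      (12 / 5 + u * (12 / 5) - u ^ 2 / 2) * ((12 / 5 - T) * ((3 / 2 - T) * (6 - T))) := by
  have : 0 ≤ 1 - T := by linarith
  have b0 : 0 ≤ (1 - T) ^ 11 := by positivity
  have b1 : 0 ≤ T * (1 - T) ^ 10 := by positivity
  have b2 : 0 ≤ T ^ 2 * (1 - T) ^ 9 := by positivity
  have b3 : 0 ≤ T ^ 3 * (1 - T) ^ 8 := by positivity
  have b4 : 0 ≤ T ^ 4 * (1 - T) ^ 7 := by positivity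
  have b5 : 0 ≤ T ^ 5 * (1 - T) ^ 6 := by positivity
  have b6 : 0 ≤ T ^ 6 * (1 - T) ^ 5 := by positivity
  have b7 : 0 ≤ T ^ 7 * (1 - T) ^ 4 := by positivity
  have b8 : 0 ≤ T ^ 8 * (1 - T) ^ 3 := by positivity
  have b9 : 0 ≤ T ^ 9 * (1 - T) ^ 2 := by positivity
  subst hu
  linarith

/-- Both factors increase with `b`, so they are compared with their values at `b = 3 / 5`. -/
lemma child_rational_bound (hb1 : b ≤ 3 / 5) (hbd : d * b = 3 - b) (hT : 0 < T)
    (hT1 : T ≤ 1) (hs0 : 0 ≤ s) (hs : s * (3 - b - T) = b * T) :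
    d * (2 * s * (1 + s ^ 2 / (3 * (1 - s ^ 2)))) ≤
      24 / 5 * T / (12 / 5 - T) * (1 + 3 / 16 * T ^ 2 / ((3 / 2 - T) * (6 - T))) := by
  have hM : 0 < 3 - b - T := by linarith
  have hM1 : 0 < 12 / 5 - T := by linarith
  have hsM : s * (12 / 5 - T) ≤ 3 / 5 * T := by nlinarith
  have hsq : s ^ 2 * (12 / 5 - T) ^ 2 ≤ 9 / 25 * T ^ 2 := by
    linarith [pow_le_pow_left₀ (mul_nonneg hs0 hM1.le) hsM 2]
  have hs1 : s ^ 2 < 1 := by nlinarith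
  have hlin : d * (2 * s) ≤ 24 / 5 * T / (12 / 5 - T) := by
    have hds : d * (2 * s) = 2 * (3 - b) * T / (3 - b - T) := by
      rw [eq_div_iff hM.ne']
      linear_combination 2 * d * hs + 2 * T * hbd
    rw [hds, div_le_div_iff₀ hM hM1]
    linarith [mul_nonneg (sq_nonneg T) (sub_nonneg.2 hb1)]
  have hcubic : s ^ 2 / (3 * (1 - s ^ 2)) ≤ 3 / 16 * T ^ 2 / ((3 / 2 - T) * (6 - T)) := by
    rw [div_le_div_iff₀ (by linarith) (mul_pos (by linarith) (by linarith))]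
    linarith
  have hcubic0 : 0 ≤ s ^ 2 / (3 * (1 - s ^ 2)) := div_nonneg (sq_nonneg s) (by linarith)
  rw [← mul_assoc]
  exact mul_le_mul hlin (by linarith) (by linarith) (by positivity)

lemma child_bound_right (hb1 : b ≤ 3 / 5) (hbd : d * b = 3 - b) (hT : 0 < T)
    (hT1 : T ≤ 1) (hu : u = T ^ 2 / 5 + 9 * T ^ 4 / 20)
    (hs0 : 0 ≤ s) (hs : s * (3 - b - T) = b * T) :
    d * -Real.log ((1 - s) / (1 + s)) ≤ 3 - b + u * (2 - b) + (u - u ^ 2 / 2) := by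
  have hu0 : 0 ≤ u := hu ▸ by positivity
  have hM1 : 0 < 12 / 5 - T := by linarith
  have hq : 0 < (3 / 2 - T) * (6 - T) := mul_pos (by linarith) (by linarith)
  have hs2 : s ^ 2 ≤ 1 / 5 := by
    have : s ≤ 3 / 7 := by nlinarith
    nlinarith
  rw [← Real.log_inv, inv_div]
  calc d * Real.log ((1 + s) / (1 - s))
      ≤ d * (2 * s * (1 + s ^ 2 / (3 * (1 - s ^ 2)))) :=
        mul_le_mul_of_nonneg_left (log_one_add_div_one_sub_le hs0 hs2) d.cast_nonneg
    _ ≤ 24 / 5 * T / (12 / 5 - T) * (1 + 3 / 16 * T ^ 2 / ((3 / 2 - T) * (6 - T))) :=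
        child_rational_bound hb1 hbd hT hT1 hs0 hs
    _ = 24 / 5 * T * ((3 / 2 - T) * (6 - T) + 3 / 16 * T ^ 2) /
          ((12 / 5 - T) * ((3 / 2 - T) * (6 - T))) := by
        rw [one_add_div hq.ne', div_mul_div_comm]
    _ ≤ 12 / 5 + u * (12 / 5) - u ^ 2 / 2 :=
        (div_le_iff₀ (mul_pos hM1 hq)).2 (child_polynomial_bound hT.le hT1 hu)
    _ ≤ 3 - b + u * (2 - b) + (u - u ^ 2 / 2) := by
        linarith [mul_nonneg hu0 (sub_nonneg.2 hb1)]

lemma child_budget_le (hb1 : b ≤ 3 / 5) (hT : 0 ≤ T) (hT1 : T ≤ 1)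
    (hu : u = T ^ 2 / 5 + 9 * T ^ 4 / 20) :
    3 - b + 2 / 5 * T ^ 2 ≤ 3 - b + u * (2 - b) + (u - u ^ 2 / 2) := by
  have hT2 : T ^ 2 ≤ 1 := pow_le_one₀ hT hT1
  have hT4 : T ^ 4 ≤ 1 := pow_le_one₀ hT hT1
  have hu0 : 0 ≤ u := hu ▸ by positivity
  have hTu : 1 / 5 * T ^ 2 ≤ u := by linarith [show 0 ≤ T ^ 4 by positivity]
  linarith [mul_nonneg hu0 (show 0 ≤ 1 - b - u / 2 by linarith)]

/-- Every extremal factor has the shape `(1 - x, 1 + x, y)` up to scaling, with a bound on `x` and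
`y` that can be summed over the `d` children. -/
lemma exists_extremal_eq_smul (hb : 0 < b) (hb1 : b ≤ 3 / 5) (hbd : d * b = 3 - b)
    (hT : 0 < T) (hT1 : T ≤ 1) (hu : u = T ^ 2 / 5 + 9 * T ^ 4 / 20) (i : Fin 3) :
    ∃ m x y : ℝ, 0 < m ∧ 0 ≤ x ∧ 0 < y ∧ extremal b T i = m • ![1 - x, 1 + x, y] ∧
      d * x ≤ (3 - b) * T / (3 - b - T) ∧
      d * ((3 - b) * x / T - Real.log y) ≤ 3 - b + u * (2 - b) + (u - u ^ 2 / 2) := by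
  have hM : 0 < 3 - b - T := by linarith
  have hM' : 0 < 3 - b + T := by linarith
  have hbT : 0 < b * T := mul_pos hb hT
  have hd : (0 : ℝ) ≤ d := d.cast_nonneg
  obtain ⟨s, hs⟩ : ∃ s, s * (3 - b - T) = b * T := ⟨_, div_mul_cancel₀ _ hM.ne'⟩
  obtain ⟨t, ht⟩ : ∃ t, t * (3 - b + T) = b * T := ⟨_, div_mul_cancel₀ _ hM'.ne'⟩
  have hs0 : 0 < s := pos_of_mul_pos_left (hs ▸ hbT) hM.le
  have ht0 : 0 < t := pos_of_mul_pos_left (ht ▸ hbT) hM'.le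
  have hs1 : s < 1 := by nlinarith
  have hts : t ≤ s := by nlinarith
  have hds : d * s = (3 - b) * T / (3 - b - T) := by
    rw [eq_div_iff hM.ne']
    linear_combination d * hs + T * hbd
  have hbudget := child_budget_le hb1 hT.le hT1 hu
  fin_cases i
  · refine ⟨3 - b - T, s, 1 + s, hM, hs0.le, by linarith, ?_, hds.le,
      (child_bound_left hb hb1 hbd hT hT1 hs0.le hs).trans hbudget⟩
    funext j
    fin_cases j <;>
      simp only [extremal, Pi.smul_apply, smul_eq_mul, Fin.zero_eta, Fin.mk_one, Fin.reduceFinMk,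
        Matrix.cons_val] <;> linarith
  · refine ⟨3 - b + T, t, 1 - t, hM', ht0.le, by linarith, ?_,
      (mul_le_mul_of_nonneg_left hts hd).trans hds.le,
      (child_bound_mid hb hb1 hbd hT hT1 ht0.le ht).trans hbudget⟩
    funext j
    fin_cases j <;>
      simp only [extremal, Pi.smul_apply, smul_eq_mul, Fin.zero_eta, Fin.mk_one, Fin.reduceFinMk,
        Matrix.cons_val] <;> linarith
  · refine ⟨3 - b - T + b * T, 0, (1 - s) / (1 + s), by linarith, le_rfl,
      div_pos (by linarith) (by linarith), ?_, ?_, ?_⟩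
    · have hratio : (3 - b - T + b * T) * ((1 - s) / (1 + s)) = 3 - b - T - b * T := by
        rw [← mul_div_assoc, div_eq_iff (by linarith)]
        linear_combination (-2) * hs
      funext j
      fin_cases j <;> simp [extremal, hratio]
    · rw [mul_zero, ← hds]
      positivity
    · simpa only [mul_zero, zero_div, zero_sub] using
        child_bound_right hb1 hbd hT hT1 hu hs0.le hs

end ChildBounds

lemma mul_sum_div_three_le {N T E : ℝ} (hN : 12 / 5 ≤ N) (hT : 0 ≤ T) (hT1 : T ≤ 1)
    (hE : E ≤ N * T / (N - T)) : N * E / 3 ≤ T * (N - 1) := by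
  have hNT : 0 < N - T := by linarith
  have hEN : E * (N - T) ≤ N * T := (le_div_iff₀ hNT).1 hE
  have hquad : N * N ≤ 3 * ((N - 1) * (N - T)) := by nlinarith
  refine le_of_mul_le_mul_right ?_ hNT
  linarith [mul_le_mul_of_nonneg_left hEN (show 0 ≤ N / 3 by linarith),
    mul_le_mul_of_nonneg_left hquad hT]

lemma mul_sum_le_of_child_bound [Fintype ι] [Nonempty ι] {N T l : ℝ} {y : ι → ℝ} (hT : 0 < T)
    (hl : 0 < l) (hy : ∀ i, 0 < y i)
    (h : ∀ i, Fintype.card ι * (N * x i / T - Real.log (y i)) ≤ l * (N - 1) + 1 + Real.log l) :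
    N * ∑ i, x i ≤ l * T * (N - 1 + ∏ i, y i) := by
  have hsum := sum_le_of_card_mul_le h
  have hprod : 0 < ∏ i, y i := Finset.prod_pos fun i _ => hy i
  have hlog := Real.log_le_sub_one_of_pos (mul_pos hl hprod)
  rw [Real.log_mul hl.ne' hprod.ne', Real.log_prod fun i _ => (hy i).ne'] at hlog
  rw [Finset.sum_sub_distrib, ← Finset.sum_div, ← Finset.mul_sum] at hsum
  have hdiv : N * (∑ i, x i) / T ≤ l * (N - 1 + ∏ i, y i) := by linarith
  rw [div_le_iff₀ hT] at hdiv
  linarith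

lemma gap_prod_nonneg_of_child_bound [Fintype ι] [Nonempty ι] {b T l : ℝ} {y : ι → ℝ}
    (hb1 : b ≤ 3 / 5) (hT : 0 < T) (hT1 : T ≤ 1) (hl : 1 ≤ l) (hx : 0 ≤ x) (hy : ∀ i, 0 < y i)
    (hxs : ∀ i, Fintype.card ι * x i ≤ (3 - b) * T / (3 - b - T))
    (hxy : ∀ i, Fintype.card ι * ((3 - b) * x i / T - Real.log (y i)) ≤
      l * (2 - b) + 1 + Real.log l) :
    0 ≤ gap b (l * T) (∏ i, ![1 - x i, 1 + x i, y i]) := by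
  have hE : (3 - b) * ∑ i, x i ≤ l * T * (3 - b - 1 + ∏ i, y i) := by
    refine mul_sum_le_of_child_bound hT (by linarith) hy fun i => ?_
    linarith [hxy i]
  have hE3 : (3 - b) * (∑ i, x i) / 3 ≤ l * T * (2 - b) := by
    have := mul_sum_div_three_le (by linarith) hT.le hT1 (sum_le_of_card_mul_le hxs)
    have := mul_nonneg (sub_nonneg.2 hl) (mul_nonneg hT.le (show 0 ≤ 2 - b by linarith))
    linarith
  have hR := two_le_prod_one_add_add_prod_one_sub hx Finset.univ
  have hD := prod_one_add_sub_prod_one_sub_sub_le hx Finset.univ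
  simp only [gap_apply, Finset.prod_apply, Matrix.cons_val]
  linarith [mul_le_mul_of_nonneg_left hD (show 0 ≤ 3 - b by linarith),
    mul_le_mul_of_nonneg_right hE3 (sub_nonneg.2 hR)]

lemma extremalIneq_of_four_le {d : ℕ} {b T : ℝ} (hd : 0 < d) (hb : 0 < b) (hb1 : b ≤ 3 / 5)
    (hbd : d * b = 3 - b) (hT : 0 < T) (hT1 : T ≤ 1) :
    ExtremalIneq d b T ((1 + (T ^ 2 / 5 + 9 * T ^ 4 / 20)) * T) := by
  set u := T ^ 2 / 5 + 9 * T ^ 4 / 20 with hu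
  have hu0 : 0 ≤ u := by positivity
  have : Nonempty (Fin d) := ⟨⟨0, hd⟩⟩
  choose m x y hm hx hy hmxy hxs hxy using
    exists_extremal_eq_smul hb hb1 hbd hT hT1 hu
  intro g
  simp only [hmxy, Finset.prod_smul, map_smul, smul_eq_mul]
  refine mul_nonneg (Finset.prod_nonneg fun k _ => (hm (g k)).le) ?_
  refine gap_prod_nonneg_of_child_bound hb1 hT hT1 (by linarith) (fun k => hx (g k))
    (fun k => hy (g k)) (fun k => ?_) fun k => ?_
  · rw [Fintype.card_fin]
    exact hxs (g k)
  · rw [Fintype.card_fin]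
    linarith [hxy (g k), sub_sq_div_two_le_log_one_add hu0]

end LargeDegree

section Contraction

variable {d : ℕ} {t T T₀ : ℝ}

lemma artanh_stepMap (ht : 0 ≤ t) (ht1 : t < 1) :
    Real.artanh (stepMap d t) = d * Real.artanh t := by
  have hratio : (1 + stepMap d t) / (1 - stepMap d t) = ((1 + t) / (1 - t)) ^ d := by
    have h1 : 0 < (1 - t) ^ d := pow_pos (by linarith) d
    have h2 := stepMap_denom_pos (d := d) ht ht1
    rw [stepMap, one_add_div h2.ne', one_sub_div h2.ne', div_div_div_cancel_right₀ h2.ne', div_pow]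
    rw [div_eq_div_iff (by linarith) h1.ne']
    ring
  rw [Real.artanh_eq_half_log ⟨by linarith, ht1.le⟩, Real.artanh_eq_half_log
    ⟨by linarith [stepMap_nonneg (d := d) ht ht1], (stepMap_lt_one ht ht1).le⟩, hratio,
    Real.log_pow]
  ring

lemma hasDerivAt_artanh {x : ℝ} (hx : x ∈ Set.Ioo (-1 : ℝ) 1) :
    HasDerivAt Real.artanh (1 - x ^ 2)⁻¹ x := by
  have h1 : 0 < 1 + x := by linarith [hx.1]
  have h2 : 0 < 1 - x := by linarith [hx.2]
  have h3 : 0 < 1 - x ^ 2 := by nlinarith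
  have hlog : HasDerivAt (fun y => 1 / 2 * (Real.log (1 + y) - Real.log (1 - y)))
      (1 / 2 * (1 / (1 + x) - -1 / (1 - x))) x :=
    ((((hasDerivAt_id x).const_add 1).log h1.ne').sub
      (((hasDerivAt_id x).const_sub 1).log h2.ne')).const_mul _
  refine (hlog.congr_of_eventuallyEq ?_).congr_deriv ?_
  · filter_upwards [isOpen_Ioo.mem_nhds hx] with y hy
    rw [Real.artanh_eq_half_log (Set.Ioo_subset_Icc_self hy),
      Real.log_div (by linarith [hy.1]) (by linarith [hy.2])]
  · field_simp
    ring

lemma mul_artanh_div_lt {c : ℝ} {s s' : ℝ → ℝ} (hs : ∀ T, HasDerivAt s (s' T) T) (hs0 : s 0 = 0)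
    (hmem : ∀ T ∈ Set.Ioo (0 : ℝ) 1, s T ∈ Set.Ico 0 c)
    (hder : ∀ T ∈ Set.Ioo (0 : ℝ) 1, s' T * (1 - T ^ 2) < 1 - (s T / c) ^ 2)
    (hT : T ∈ Set.Ioo (0 : ℝ) 1) : c * Real.artanh (s T / c) < Real.artanh T := by
  have hc : 0 < c := (hmem T hT).1.trans_lt (hmem T hT).2
  have hratio {x : ℝ} (hx : x ∈ Set.Ico (0 : ℝ) 1) : s x / c ∈ Set.Ico (0 : ℝ) 1 := by
    rcases hx.1.eq_or_lt with rfl | hx0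
    · simp [hs0]
    · exact ⟨div_nonneg (hmem x ⟨hx0, hx.2⟩).1 hc.le, (div_lt_one hc).2 (hmem x ⟨hx0, hx.2⟩).2⟩
  have hderiv {x : ℝ} (hx : x ∈ Set.Ico (0 : ℝ) 1) :
      HasDerivAt (fun x => Real.artanh x - c * Real.artanh (s x / c))
        ((1 - x ^ 2)⁻¹ - s' x * (1 - (s x / c) ^ 2)⁻¹) x := by
    have h1 := hasDerivAt_artanh (x := x) ⟨by linarith [hx.1], hx.2⟩
    have h2 := hasDerivAt_artanh (x := s x / c) ⟨by linarith [(hratio hx).1], (hratio hx).2⟩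
    refine (h1.sub ((h2.comp x ((hs x).div_const c)).const_mul c)).congr_deriv ?_
    field_simp
  have hmono : StrictMonoOn (fun x => Real.artanh x - c * Real.artanh (s x / c))
      (Set.Ico 0 1) := by
    refine strictMonoOn_of_deriv_pos (convex_Ico 0 1)
      (fun x hx => (hderiv hx).continuousAt.continuousWithinAt) fun x hx => ?_
    rw [interior_Ico] at hx
    have hx' := Set.Ioo_subset_Ico_self hx
    have h1 : 0 < 1 - x ^ 2 := by nlinarith [hx.1, hx.2]
    have h2 : 0 < 1 - (s x / c) ^ 2 := by nlinarith [(hratio hx').1, (hratio hx').2]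
    rw [(hderiv hx').deriv, sub_pos, ← div_eq_mul_inv, ← one_div, div_lt_div_iff₀ h2 h1, one_mul]
    exact hder x hx
  have := hmono (Set.left_mem_Ico.2 one_pos) (Set.Ioo_subset_Ico_self hT) hT.1
  simpa only [hs0, zero_div, Real.artanh_zero, mul_zero, sub_zero, sub_pos] using this

/-- For `b ≤ 3 / (d + 1)`, two steps of the recursion turn `T`-balanced messages with
`T ∈ (0, T₀]` into `stepMap d (s T / d)`-balanced ones, and this is an improvement. -/
structure IsContraction (d : ℕ) (T₀ : ℝ) (s : ℝ → ℝ) : Prop where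
  continuous : Continuous s
  mem_Ico : ∀ T ∈ Set.Ioc 0 T₀, s T ∈ Set.Ico (0 : ℝ) d
  extremalIneq : ∀ T ∈ Set.Ioc 0 T₀, ExtremalIneq d (3 / (d + 1)) T (s T)
  stepMap_lt : ∀ T ∈ Set.Ioc 0 T₀, stepMap d (s T / d) < T

lemma isContraction_of_hasDerivAt {s s' : ℝ → ℝ} (hT₀ : T₀ < 1)
    (hs : ∀ T, HasDerivAt s (s' T) T) (hs0 : s 0 = 0)
    (hmem : ∀ T ∈ Set.Ioo (0 : ℝ) 1, s T ∈ Set.Ico (0 : ℝ) d)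
    (hder : ∀ T ∈ Set.Ioo (0 : ℝ) 1, s' T * (1 - T ^ 2) < 1 - (s T / d) ^ 2)
    (hext : ∀ T ∈ Set.Ioc 0 T₀, ExtremalIneq d (3 / (d + 1)) T (s T)) :
    IsContraction d T₀ s where
  continuous := continuous_iff_continuousAt.2 fun T => (hs T).continuousAt
  mem_Ico T hT := hmem T ⟨hT.1, hT.2.trans_lt hT₀⟩
  extremalIneq := hext
  stepMap_lt T hT := by
    have hT' : T ∈ Set.Ioo (0 : ℝ) 1 := ⟨hT.1, hT.2.trans_lt hT₀⟩
    obtain ⟨h0, h1⟩ := hmem T hT'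
    have ht0 : 0 ≤ s T / d := by positivity
    have ht1 : s T / d < 1 := (div_lt_one (h0.trans_lt h1)).2 h1
    rw [← Real.artanh_lt_artanh_iff ⟨by linarith [stepMap_nonneg (d := d) ht0 ht1],
      stepMap_lt_one ht0 ht1⟩ ⟨by linarith [hT.1], hT'.2⟩, artanh_stepMap ht0 ht1]
    exact mul_artanh_div_lt hs hs0 hmem hder hT'

lemma isContraction_two : IsContraction 2 (2 / 3) fun T => T := by
  refine isContraction_of_hasDerivAt (by norm_num) hasDerivAt_id' rfl ?_ ?_ ?_ <;>
    rintro T ⟨h0, h1⟩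
  · exact ⟨h0.le, by norm_num; linarith⟩
  · norm_num
    linarith [pow_pos h0 2]
  · norm_num
    exact extremalIneq_two h0.le h1

lemma isContraction_three (hT₀ : T₀ < 1) : IsContraction 3 T₀ fun T => T + T ^ 3 / 4 := by
  refine isContraction_of_hasDerivAt (s' := fun T => 1 + 3 * T ^ 2 / 4) hT₀ (fun T => ?_)
    (by norm_num) ?_ ?_ ?_
  · refine ((hasDerivAt_id' T).add ((hasDerivAt_pow 3 T).div_const 4)).congr_deriv ?_
    norm_num
  · rintro T ⟨h0, h1⟩
    refine ⟨by positivity, ?_⟩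
    norm_num
    linarith [pow_le_one₀ h0.le h1.le (n := 3)]
  · rintro T ⟨h0, h1⟩
    have hx0 : 0 < T ^ 2 := pow_pos h0 2
    have hx1 : T ^ 2 < 1 := pow_lt_one₀ h0.le h1 two_ne_zero
    have hT : T + T ^ 3 / 4 = T * (1 + T ^ 2 / 4) := by ring
    rw [hT, Nat.cast_ofNat, div_pow, mul_pow]
    generalize T ^ 2 = x at *
    have hfactor : 0 < 1 / 4 + 3 / 4 * x - (1 + x / 4) ^ 2 / 9 := by nlinarith
    linarith [mul_pos hx0 hfactor]
  · rintro T ⟨h0, h1⟩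
    norm_num
    exact extremalIneq_three h0.le (h1.trans hT₀.le)

lemma isContraction_of_four_le (hd : 4 ≤ d) (hT₀ : T₀ < 1) :
    IsContraction d T₀ fun T => (1 + (T ^ 2 / 5 + 9 * T ^ 4 / 20)) * T := by
  have hd' : (4 : ℝ) ≤ d := Nat.ofNat_le_cast.2 hd
  refine isContraction_of_hasDerivAt (s' := fun T => 1 + 3 * T ^ 2 / 5 + 9 * T ^ 4 / 4) hT₀
    (fun T => ?_) (by norm_num) ?_ ?_ ?_
  · have hsq := (hasDerivAt_pow 2 T).div_const 5
    have hfourth := ((hasDerivAt_pow 4 T).const_mul 9).div_const 20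
    refine (((hsq.add hfourth).const_add 1).mul (hasDerivAt_id' T)).congr_deriv ?_
    norm_num
    ring
  · rintro T ⟨h0, h1⟩
    refine ⟨by positivity, ?_⟩
    linarith [pow_le_one₀ h0.le h1.le (n := 3), pow_le_one₀ h0.le h1.le (n := 5)]
  · rintro T ⟨h0, h1⟩
    have hdeg : ((1 + (T ^ 2 / 5 + 9 * T ^ 4 / 20)) * T / d) ^ 2 ≤
        ((1 + (T ^ 2 / 5 + 9 * T ^ 4 / 20)) * T / 4) ^ 2 := by
      gcongr
    refine lt_of_lt_of_le ?_ (sub_le_sub_left hdeg 1)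
    have hx0 : 0 < T ^ 2 := pow_pos h0 2
    have hx1 : T ^ 2 < 1 := pow_lt_one₀ h0.le h1 two_ne_zero
    rw [show T ^ 4 = (T ^ 2) ^ 2 by ring, div_pow, mul_pow]
    generalize T ^ 2 = x at *
    have hfactor : 0 < 2 / 5 - 33 / 20 * x + 9 / 4 * x ^ 2 -
        (1 + (x / 5 + 9 * x ^ 2 / 20)) ^ 2 / 16 := by
      nlinarith [sq_nonneg (x - 3 / 8), mul_pos hx0 (sub_pos.2 hx1),
        mul_nonneg hx0.le (sq_nonneg (x - 3 / 8)),
        mul_nonneg (sub_pos.2 hx1).le (sq_nonneg (x - 3 / 8))]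
    linarith [mul_pos hx0 hfactor]
  · rintro T ⟨h0, h1⟩
    refine extremalIneq_of_four_le (by omega) (by positivity) ?_ ?_ h0 (h1.trans hT₀.le)
    · rw [div_le_div_iff₀ (by positivity) (by norm_num)]
      linarith
    · field_simp
      ring

end Contraction

section MessageSystem

variable {ι : Type*} [Fintype ι] {d : ℕ} {b : ℝ} {M : ℕ → Set (ι → ℝ)}

/-- `M n` is a nonempty set of messages sent by vertices at distance `n` from the leaves of the
`d`-ary tree. -/
structure IsMessageSystem (d : ℕ) (b : ℝ) (M : ℕ → Set (ι → ℝ)) : Prop where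
  nonempty : ∀ n, (M n).Nonempty
  mem_stdSimplex : ∀ n, ∀ p ∈ M n, p ∈ stdSimplex ℝ ι
  exists_eq_normMessage : ∀ n, ∀ p ∈ M (n + 1),
    ∃ q : Fin d → ι → ℝ, (∀ j, q j ∈ M n) ∧ p = normMessage b q

lemma IsMessageSystem.eventually_of_step (hM : IsMessageSystem d b M) {P Q : (ι → ℝ) → Prop}
    (hP : ∀ᶠ n in atTop, ∀ p ∈ M n, P p)
    (h : ∀ p : Fin d → ι → ℝ, (∀ j, p j ∈ stdSimplex ℝ ι) → (∀ j, P (p j)) →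
      Q (normMessage b p)) :
    ∀ᶠ n in atTop, ∀ p ∈ M n, Q p := by
  rw [← map_add_atTop_eq_nat 1, eventually_map]
  filter_upwards [hP] with n hn p hp
  obtain ⟨q, hq, rfl⟩ := hM.exists_eq_normMessage n p hp
  exact h q (fun j => hM.mem_stdSimplex n _ (hq j)) fun j => hn _ (hq j)

lemma balanced_normMessage {p : Fin d → ι → ℝ} (hb : 0 ≤ b) (hb1 : b < 1)
    (hp : ∀ j, p j ∈ stdSimplex ℝ ι) :
    Balanced (stepMap d (b / (2 - b))) (normMessage b p) := by
  have h2 : 0 < 2 - b := by linarith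
  refine balanced_normMessage_of_ratio hb1 (by positivity) ((div_lt_one h2).2 (by linarith)) hp
    fun j c c' _ => ?_
  rw [one_sub_div h2.ne', one_add_div h2.ne', div_mul_eq_mul_div, div_mul_eq_mul_div]
  refine div_le_div_of_nonneg_right ?_ h2.le
  obtain ⟨h0, -⟩ := mem_Icc_of_mem_stdSimplex (hp j) c
  obtain ⟨-, h1⟩ := mem_Icc_of_mem_stdSimplex (hp j) c'
  linarith [mul_nonneg (mul_nonneg hb h0) (sub_nonneg.2 hb1.le),
    mul_le_mul_of_nonneg_left h1 hb]

lemma IsMessageSystem.exists_eventually_balanced (hM : IsMessageSystem d b M) (hb : 0 ≤ b)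
    (hb1 : b < 1) :
    ∃ T, 0 ≤ T ∧ T < 1 ∧ ∀ᶠ n in atTop, ∀ p ∈ M n, Balanced T p := by
  have ht0 : 0 ≤ b / (2 - b) := div_nonneg hb (by linarith)
  have ht1 : b / (2 - b) < 1 := (div_lt_one (by linarith)).2 (by linarith)
  exact ⟨stepMap d (b / (2 - b)), stepMap_nonneg ht0 ht1, stepMap_lt_one ht0 ht1,
    hM.eventually_of_step (P := fun _ => True) (by simp) fun p hp _ =>
      balanced_normMessage hb hb1 hp⟩

lemma exists_mem_lt_of_forall_map_lt {f : ℝ → ℝ} {S : Set ℝ} {T₀ ε : ℝ} (hne : S.Nonempty)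
    (hS : S ⊆ Set.Icc 0 T₀) (hf : ∀ T ∈ Set.Ioc 0 T₀, ContinuousAt f T)
    (hlt : ∀ T ∈ Set.Ioc 0 T₀, f T < T) (hmap : ∀ T ∈ S, 0 < T → f T ∈ S) (hε : 0 < ε) :
    ∃ T ∈ S, T < ε := by
  have hbdd : BddBelow S := ⟨0, fun T hT => (hS hT).1⟩
  suffices h : sInf S ≤ 0 from exists_lt_of_csInf_lt hne (h.trans_lt hε)
  by_contra! hpos
  obtain ⟨T₁, hT₁⟩ := hne
  have hmem : sInf S ∈ Set.Ioc 0 T₀ := ⟨hpos, (csInf_le hbdd hT₁).trans (hS hT₁).2⟩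
  obtain ⟨T, hT, hfT⟩ :=
    ((mem_closure_iff_frequently.1 (csInf_mem_closure ⟨T₁, hT₁⟩ hbdd)).and_eventually
      ((hf _ hmem).eventually_lt_const (hlt _ hmem))).exists
  exact (csInf_le hbdd (hmap T hT (hpos.trans_le (csInf_le hbdd hT)))).not_gt hfT

lemma IsMessageSystem.eventually_balanced {M : ℕ → Set (Fin 3 → ℝ)} {s : ℝ → ℝ} {T₀ ε : ℝ}
    (hM : IsMessageSystem d b M) (hC : IsContraction d T₀ s) (hd : 2 ≤ d) (hb : 0 ≤ b)
    (hbd : b ≤ 3 / (d + 1)) (hb1 : b < 1) (hT₀ : 0 ≤ T₀) (hT₀1 : T₀ ≤ 1)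
    (hbal : ∀ᶠ n in atTop, ∀ p ∈ M n, Balanced T₀ p) (hε : 0 < ε) :
    ∀ᶠ n in atTop, ∀ p ∈ M n, Balanced ε p := by
  have hd2 : (2 : ℝ) ≤ d := Nat.ofNat_le_cast.2 hd
  have hd0 : (0 : ℝ) < d := by linarith
  have hthreshold : d * (3 / (d + 1) : ℝ) = 3 - 3 / (d + 1) := by
    field_simp
    ring
  have hthreshold1 : 3 / (d + 1 : ℝ) ≤ 1 := (div_le_one (by positivity)).2 (by linarith)
  have hratio {T : ℝ} (hT : T ∈ Set.Ioc 0 T₀) : s T / d ∈ Set.Ico (0 : ℝ) 1 :=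
    ⟨div_nonneg (hC.mem_Ico T hT).1 hd0.le, (div_lt_one hd0).2 (hC.mem_Ico T hT).2⟩
  set S : Set ℝ := {T | T ∈ Set.Icc 0 T₀ ∧ ∀ᶠ n in atTop, ∀ p ∈ M n, Balanced T p}
  have hstep (T : ℝ) (hT : T ∈ S) (hT0 : 0 < T) : stepMap d (s T / d) ∈ S := by
    obtain ⟨⟨-, hTT₀⟩, hbalT⟩ := hT
    have hT : T ∈ Set.Ioc 0 T₀ := ⟨hT0, hTT₀⟩
    refine ⟨⟨stepMap_nonneg (hratio hT).1 (hratio hT).2, (hC.stepMap_lt T hT).le.trans hTT₀⟩, ?_⟩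
    have hchildren := hM.eventually_of_step
      (Q := fun p => ∃ q : Fin d → Fin 3 → ℝ,
        (∀ k, q k ∈ stdSimplex ℝ (Fin 3)) ∧ (∀ k, Balanced T (q k)) ∧ p = normMessage b q)
      hbalT fun q hq hqT => ⟨q, hq, hqT, rfl⟩
    refine hM.eventually_of_step hchildren fun p _ hp => ?_
    choose q hq hqT hpq using hp
    obtain rfl : p = fun j => normMessage b (q j) := funext hpq
    exact balanced_two_step (by omega) hthreshold hthreshold1 hb hb1 hbd hT0 (hTT₀.trans hT₀1)
      (hC.mem_Ico T hT).1 (hC.mem_Ico T hT).2 (hC.extremalIneq T hT) hq hqT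
  obtain ⟨T, ⟨-, hT⟩, hTε⟩ := exists_mem_lt_of_forall_map_lt (f := fun T => stepMap d (s T / d))
    (S := S) ⟨T₀, ⟨hT₀, le_rfl⟩, hbal⟩ (fun T hT => hT.1)
    (fun T hT => (continuousAt_stepMap (hratio hT).1 (hratio hT).2).comp
      (f := fun T => s T / d) (hC.continuous.div_const _).continuousAt)
    hC.stepMap_lt hstep hε
  filter_upwards [hT] with n hn p hp
  exact (hn p hp).mono hTε.le (hM.mem_stdSimplex n p hp).1

end MessageSystem

section BinaryTree

variable {b u l : ℝ}

lemma fU_two (β x y : ℝ) : fU 2 β x y =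
    (1 - (1 - β) * y) ^ 2 / ((1 - (1 - β) * y) ^ 2 +
      2 * ((1 - (1 - β) * x) * (1 - (1 - β) * (1 - x - y)))) := by
  rw [fU, Nat.cast_ofNat, div_self two_ne_zero, Real.rpow_one, Real.rpow_one, mul_assoc]

lemma mul_le_mul_of_add_le {A B x y : ℝ} (hA : 0 ≤ A) (hx : A ≤ x) (hy : A ≤ y)
    (h : A + B ≤ x + y) : A * B ≤ x * y := by
  linarith [mul_nonneg (sub_nonneg.2 hx) (sub_nonneg.2 hy), mul_nonneg hA (sub_nonneg.2 h)]

lemma sq_add_sq_le_of_add_le {A B x y : ℝ} (hx : 0 ≤ x) (hy : 0 ≤ y) (hxA : x ≤ A) (hyA : y ≤ A)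
    (h : x + y ≤ A + B) : x ^ 2 + y ^ 2 ≤ A ^ 2 + B ^ 2 := by
  rcases le_total (x + y) A with hA | hA
  · linarith [pow_le_pow_left₀ (add_nonneg hx hy) hA 2, mul_nonneg hx hy, sq_nonneg B]
  · linarith [pow_le_pow_left₀ (sub_nonneg.2 hA) (sub_le_iff_le_add'.2 h) 2,
      mul_nonneg (sub_nonneg.2 hxA) (sub_nonneg.2 hyA)]

lemma div_add_le_div_add {x x' y y' : ℝ} (hx : 0 < x) (hy' : 0 ≤ y') (hxx' : x ≤ x')
    (hyy' : y' ≤ y) : x / (x + y) ≤ x' / (x' + y') := by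
  rw [div_le_div_iff₀ (by linarith) (by linarith)]
  linarith [mul_le_mul hxx' hyy' hy' (hx.le.trans hxx')]

lemma exists_sum_eq_add (c : Fin 3) :
    ∃ c₂ c₃, ∀ f : Fin 3 → ℝ, ∑ i, f i = f c + (f c₂ + f c₃) := by
  refine ⟨c + 1, c + 2, fun f => ?_⟩
  fin_cases c <;> simp [Fin.sum_univ_three] <;> ring

lemma one_sub_mul_pos {x : ℝ} (hb : 0 ≤ b) (hb1 : b < 1) (hx : x ≤ 1) : 0 < 1 - b * x := by
  linarith [mul_le_mul_of_nonneg_left hx hb]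

lemma normMessage_le_fU {p : Fin 2 → Fin 3 → ℝ} (hb : 0 ≤ b) (hb1 : b < 1) (hu : u ≤ 1)
    (hul : 0 ≤ u + l) (hp : ∀ j, p j ∈ stdSimplex ℝ (Fin 3)) (hpu : ∀ j c, p j c ≤ u)
    (hlp : ∀ j c, l ≤ p j c) (c : Fin 3) : normMessage b p c ≤ fU 2 (1 - b) u l := by
  obtain ⟨c₂, c₃, hsum⟩ := exists_sum_eq_add c
  have hfactor (j : Fin 2) (c : Fin 3) : 0 < 1 - b * p j c :=
    one_sub_mul_pos hb hb1 ((hpu j c).trans hu)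
  have hle (j : Fin 2) (c : Fin 3) : 1 - b * p j c ≤ 1 - b * l :=
    sub_le_sub_left (mul_le_mul_of_nonneg_left (hlp j c) hb) 1
  have hge (j : Fin 2) (c : Fin 3) : 1 - b * u ≤ 1 - b * p j c :=
    sub_le_sub_left (mul_le_mul_of_nonneg_left (hpu j c) hb) 1
  have hbu : 0 < 1 - b * u := one_sub_mul_pos hb hb1 hu
  have hbv : 0 < 1 - b * (1 - u - l) := one_sub_mul_pos hb hb1 (by linarith)
  have hpair (j : Fin 2) : (1 - b * u) * (1 - b * (1 - u - l)) ≤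
      (1 - b * p j c₂) * (1 - b * p j c₃) := by
    refine mul_le_mul_of_add_le hbu.le (hge j c₂) (hge j c₃) ?_
    linarith [congrArg (b * ·) ((hsum (p j)).symm.trans (hp j).2),
      mul_le_mul_of_nonneg_left (hlp j c) hb]
  rw [fU_two, sub_sub_cancel, normMessage, hsum]
  simp only [message, Fin.prod_univ_two]
  refine div_add_le_div_add (mul_pos (hfactor 0 c) (hfactor 1 c)) (by positivity) ?_ ?_
  · rw [sq]
    exact mul_le_mul (hle 0 c) (hle 1 c) (hfactor 1 c).le ((hfactor 0 c).le.trans (hle 0 c))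
  · refine two_mul_le_add_of_sq_le_mul (mul_pos (hfactor 0 c₂) (hfactor 1 c₂)).le
      (mul_pos (hfactor 0 c₃) (hfactor 1 c₃)).le ?_
    rw [sq, mul_mul_mul_comm (1 - b * p 0 c₂)]
    exact mul_le_mul (hpair 0) (hpair 1) (by positivity)
      (mul_pos (hfactor 0 c₂) (hfactor 0 c₃)).le

lemma fL_le_normMessage {p : Fin 2 → Fin 3 → ℝ} (hb : 0 ≤ b) (hb1 : b < 1) (hu : u ≤ 1)
    (hp : ∀ j, p j ∈ stdSimplex ℝ (Fin 3)) (hpu : ∀ j c, p j c ≤ u)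
    (hlp : ∀ j c, l ≤ p j c) (c : Fin 3) : fL 2 (1 - b) u l ≤ normMessage b p c := by
  obtain ⟨c₂, c₃, hsum⟩ := exists_sum_eq_add c
  have hfactor (j : Fin 2) (c : Fin 3) : 0 < 1 - b * p j c :=
    one_sub_mul_pos hb hb1 ((hpu j c).trans hu)
  have hle (j : Fin 2) (c : Fin 3) : 1 - b * p j c ≤ 1 - b * l :=
    sub_le_sub_left (mul_le_mul_of_nonneg_left (hlp j c) hb) 1
  have hge (j : Fin 2) (c : Fin 3) : 1 - b * u ≤ 1 - b * p j c :=
    sub_le_sub_left (mul_le_mul_of_nonneg_left (hpu j c) hb) 1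
  have hbu : 0 < 1 - b * u := one_sub_mul_pos hb hb1 hu
  have hpair (j : Fin 2) : (1 - b * p j c₂) ^ 2 + (1 - b * p j c₃) ^ 2 ≤
      (1 - b * l) ^ 2 + (1 - b * (1 - u - l)) ^ 2 := by
    refine sq_add_sq_le_of_add_le (hfactor j c₂).le (hfactor j c₃).le (hle j c₂) (hle j c₃) ?_
    linarith [congrArg (b * ·) ((hsum (p j)).symm.trans (hp j).2),
      mul_le_mul_of_nonneg_left (hpu j c) hb]
  rw [fL, sub_sub_cancel, add_assoc, normMessage, hsum]
  simp only [message, Fin.prod_univ_two]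
  refine div_add_le_div_add (by positivity)
    (add_pos (mul_pos (hfactor 0 c₂) (hfactor 1 c₂)) (mul_pos (hfactor 0 c₃) (hfactor 1 c₃))).le
    ?_ ?_
  · rw [sq]
    exact mul_le_mul (hge 0 c) (hge 1 c) hbu.le (hfactor 0 c).le
  · linarith [hpair 0, hpair 1, two_mul_le_add_sq (1 - b * p 0 c₂) (1 - b * p 1 c₂),
      two_mul_le_add_sq (1 - b * p 0 c₃) (1 - b * p 1 c₃)]

lemma not_fixed_of_five_mul_le {U L : ℝ} (hL : 0 ≤ L) (hU : 1 / 2 < U) (h : 5 * L ≤ U)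
    (hfU : 2 * U * (U + L) ≤ (1 - L) ^ 2)
    (hfL : (1 - L) * (1 - U) ^ 2 ≤ L * ((1 - L) ^ 2 + (U + L) ^ 2)) : False := by
  have hL8 : L ≤ 1 / 8 := by
    by_contra! hL8
    have : (5 * L) * (6 * L) ≤ U * (U + L) := by gcongr; linarith
    nlinarith
  have hUL : U ≤ 5 / 7 - 6 / 5 * L := by
    by_contra! hUL
    have : (5 / 7 - 6 / 5 * L) * (5 / 7 - 1 / 5 * L) ≤ U * (U + L) :=
      mul_le_mul hUL.le (by linarith) (by linarith) (by linarith)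
    nlinarith
  have hlower : (1 - L) * (2 / 7 + 6 / 5 * L) ^ 2 ≤ (1 - L) * (1 - U) ^ 2 :=
    mul_le_mul_of_nonneg_left (pow_le_pow_left₀ (by linarith) (by linarith) 2) (by linarith)
  have hupper : L * (U + L) ^ 2 ≤ L * (5 / 7 - 1 / 5 * L) ^ 2 :=
    mul_le_mul_of_nonneg_left (pow_le_pow_left₀ (by linarith) (by linarith) 2) hL
  linarith [mul_nonneg (sq_nonneg L) (sub_nonneg.2 hL8), sq_nonneg (L - 1 / 6)]

lemma two_mul_mul_add_le_of_fixed {U L : ℝ} (hb : 0 < b) (hb1 : b < 1) (hU : 1 / 2 ≤ U)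
    (hU1 : U ≤ 1)
    (hfU : U * ((1 - b * L) ^ 2 + 2 * ((1 - b * U) * (1 - b * (1 - U - L)))) ≤ (1 - b * L) ^ 2) :
    2 * U * (U + L) ≤ (1 - L) ^ 2 := by
  have hfU' : 2 * U * (1 - b * (1 - U - L)) ≤ (1 - b * L) ^ 2 := by
    refine le_of_mul_le_mul_left ?_ (one_sub_mul_pos hb.le hb1 hU1)
    have hUb : 1 - U ≤ 1 - b * U := by
      linarith [mul_le_mul_of_nonneg_right hb1.le (by linarith : 0 ≤ U)]
    linarith [mul_le_mul_of_nonneg_right hUb (sq_nonneg (1 - b * L))]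
  have hb1' := sub_nonneg.2 hb1.le
  refine le_of_mul_le_mul_left ?_ hb
  linarith [mul_nonneg hb1' (sub_nonneg.2 hU), mul_nonneg (mul_nonneg hb.le hb1') (sq_nonneg L)]

lemma one_sub_mul_sq_le_of_fixed {U L : ℝ} (hb : 0 ≤ b) (hb1 : b < 1) (hU : 1 / 2 ≤ U)
    (hU1 : U ≤ 1) (hL : 0 ≤ L) (hLU : L ≤ U)
    (hfL : (1 - b * U) ^ 2 ≤
      L * ((1 - b * U) ^ 2 + (1 - b * L) ^ 2 + (1 - b * (1 - U - L)) ^ 2)) :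
    (1 - L) * (1 - U) ^ 2 ≤ L * ((1 - L) ^ 2 + (U + L) ^ 2) := by
  have hbU := one_sub_mul_pos hb hb1 hU1
  have hratio {x : ℝ} (hx : x ≤ U) :
      (1 - U) ^ 2 * (1 - b * x) ^ 2 ≤ (1 - b * U) ^ 2 * (1 - x) ^ 2 := by
    rw [← mul_pow, ← mul_pow]
    refine pow_le_pow_left₀ (mul_nonneg (sub_nonneg.2 hU1)
      (one_sub_mul_pos hb hb1 (hx.trans hU1)).le) ?_ 2
    linarith [mul_nonneg (sub_nonneg.2 hb1.le) (sub_nonneg.2 hx)]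
  have hsum := mul_le_mul_of_nonneg_left
    (add_le_add (hratio hLU) (hratio (by linarith : 1 - U - L ≤ U))) hL
  refine le_of_mul_le_mul_left ?_ (pow_pos hbU 2)
  linarith [mul_le_mul_of_nonneg_left hfL (sq_nonneg (1 - U))]

lemma lt_five_mul_of_fixed {U L : ℝ} (hb : 0 < b) (hb1 : b < 1) (hU : 0 ≤ U) (hU1 : U ≤ 1)
    (hL : 0 ≤ L)
    (hfU : U * ((1 - b * L) ^ 2 + 2 * ((1 - b * U) * (1 - b * (1 - U - L)))) ≤ (1 - b * L) ^ 2)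
    (hfL : (1 - b * U) ^ 2 ≤
      L * ((1 - b * U) ^ 2 + (1 - b * L) ^ 2 + (1 - b * (1 - U - L)) ^ 2)) :
    U < 5 * L := by
  by_contra! h
  rcases le_or_gt U (1 / 2) with hU' | hU'
  · have hsq {x : ℝ} (hx : 0 ≤ x) (hx1 : x ≤ 1) : (1 - b * x) ^ 2 ≤ 1 :=
      pow_le_one₀ (one_sub_mul_pos hb.le hb1 hx1).le (by linarith [mul_nonneg hb.le hx])
    have hbU : (1 / 2) ^ 2 ≤ (1 - b * U) ^ 2 :=
      pow_le_pow_left₀ (by norm_num) (by linarith [mul_le_mul_of_nonneg_right hb1.le hU]) 2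
    nlinarith [mul_le_mul_of_nonneg_left (hsq hL (by linarith)) hL,
      mul_le_mul_of_nonneg_left (hsq (x := 1 - U - L) (by linarith) (by linarith)) hL]
  · exact not_fixed_of_five_mul_le hL hU' h (two_mul_mul_add_le_of_fixed hb hb1 hU'.le hU1 hfU)
      (one_sub_mul_sq_le_of_fixed hb.le hb1 hU'.le hU1 hL (by linarith) hfL)

lemma fU_denom_pos (hb : 0 ≤ b) (hb1 : b < 1) (hu : u ≤ 1) (hul : 0 ≤ u + l) :
    0 < (1 - b * l) ^ 2 + 2 * ((1 - b * u) * (1 - b * (1 - u - l))) := by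
  have hbu := one_sub_mul_pos hb hb1 hu
  have hbv : 0 < 1 - b * (1 - u - l) := one_sub_mul_pos hb hb1 (by linarith)
  positivity

lemma fL_denom_pos (hb : 0 ≤ b) (hb1 : b < 1) (hu : u ≤ 1) :
    0 < (1 - b * u) ^ 2 + (1 - b * l) ^ 2 + (1 - b * (1 - u - l)) ^ 2 := by
  have hbu := one_sub_mul_pos hb hb1 hu
  positivity

/-- The numbers below which all coordinates of all messages in `M n` eventually lie, capped at
`1`. -/
def eventualUpperBounds (M : ℕ → Set (Fin 3 → ℝ)) : Set ℝ :=
  {u | u ≤ 1 ∧ ∀ᶠ n in atTop, ∀ p ∈ M n, ∀ c, p c ≤ u}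

/-- The nonnegative numbers above which all coordinates of all messages in `M n` eventually lie. -/
def eventualLowerBounds (M : ℕ → Set (Fin 3 → ℝ)) : Set ℝ :=
  {l | 0 ≤ l ∧ ∀ᶠ n in atTop, ∀ p ∈ M n, ∀ c, l ≤ p c}

section EventualBounds

variable {d : ℕ} {M : ℕ → Set (Fin 3 → ℝ)}

lemma IsMessageSystem.one_mem_eventualUpperBounds (hM : IsMessageSystem d b M) :
    1 ∈ eventualUpperBounds M :=
  ⟨le_rfl, .of_forall fun n p hp c => (mem_Icc_of_mem_stdSimplex (hM.mem_stdSimplex n p hp) c).2⟩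

lemma IsMessageSystem.zero_mem_eventualLowerBounds (hM : IsMessageSystem d b M) :
    0 ∈ eventualLowerBounds M :=
  ⟨le_rfl, .of_forall fun n p hp c => (hM.mem_stdSimplex n p hp).1 c⟩

lemma IsMessageSystem.third_le (hM : IsMessageSystem d b M) (hu : u ∈ eventualUpperBounds M) :
    1 / 3 ≤ u := by
  obtain ⟨n, hn⟩ := hu.2.exists
  obtain ⟨p, hp⟩ := hM.nonempty n
  have hsum := (hM.mem_stdSimplex n p hp).2
  rw [Fin.sum_univ_three] at hsum
  linarith [hn p hp 0, hn p hp 1, hn p hp 2]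

lemma IsMessageSystem.le_third (hM : IsMessageSystem d b M) (hl : l ∈ eventualLowerBounds M) :
    l ≤ 1 / 3 := by
  obtain ⟨n, hn⟩ := hl.2.exists
  obtain ⟨p, hp⟩ := hM.nonempty n
  have hsum := (hM.mem_stdSimplex n p hp).2
  rw [Fin.sum_univ_three] at hsum
  linarith [hn p hp 0, hn p hp 1, hn p hp 2]

lemma IsMessageSystem.bddBelow_eventualUpperBounds (hM : IsMessageSystem d b M) :
    BddBelow (eventualUpperBounds M) :=
  ⟨1 / 3, fun _ => hM.third_le⟩

lemma IsMessageSystem.bddAbove_eventualLowerBounds (hM : IsMessageSystem d b M) :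
    BddAbove (eventualLowerBounds M) :=
  ⟨1 / 3, fun _ => hM.le_third⟩

lemma eventually_forall_le_and_ge (hu : u ∈ eventualUpperBounds M)
    (hl : l ∈ eventualLowerBounds M) :
    ∀ᶠ n in atTop, ∀ p ∈ M n, (∀ c, p c ≤ u) ∧ ∀ c, l ≤ p c := by
  filter_upwards [hu.2, hl.2] with n hpu hlp p hp
  exact ⟨hpu p hp, hlp p hp⟩

lemma IsMessageSystem.fU_mem_eventualUpperBounds (hM : IsMessageSystem 2 b M) (hb : 0 ≤ b)
    (hb1 : b < 1) (hu : u ∈ eventualUpperBounds M) (hl : l ∈ eventualLowerBounds M) :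
    fU 2 (1 - b) u l ∈ eventualUpperBounds M := by
  have hul : 0 ≤ u + l := by linarith [hM.third_le hu, hl.1]
  refine ⟨?_, hM.eventually_of_step (eventually_forall_le_and_ge hu hl) fun p hp hbounds =>
    normMessage_le_fU hb hb1 hu.1 hul hp (fun j => (hbounds j).1) fun j => (hbounds j).2⟩
  rw [fU_two, sub_sub_cancel]
  refine div_le_one_of_le₀ (le_add_of_nonneg_right ?_) (fU_denom_pos hb hb1 hu.1 hul).le
  exact mul_nonneg zero_le_two (mul_pos (one_sub_mul_pos hb hb1 hu.1)
    (one_sub_mul_pos hb hb1 (by linarith))).le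

lemma IsMessageSystem.fL_mem_eventualLowerBounds (hM : IsMessageSystem 2 b M) (hb : 0 ≤ b)
    (hb1 : b < 1) (hu : u ∈ eventualUpperBounds M) (hl : l ∈ eventualLowerBounds M) :
    fL 2 (1 - b) u l ∈ eventualLowerBounds M := by
  refine ⟨?_, hM.eventually_of_step (eventually_forall_le_and_ge hu hl) fun p hp hbounds =>
    fL_le_normMessage hb hb1 hu.1 hp (fun j => (hbounds j).1) fun j => (hbounds j).2⟩
  unfold fL
  positivity

lemma csInf_prodMk_csSup_mem_closure {A B : Set ℝ} (hA : A.Nonempty) (hA' : BddBelow A)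
    (hB : B.Nonempty) (hB' : BddAbove B) : (sInf A, sSup B) ∈ closure (A ×ˢ B) := by
  rw [closure_prod_eq]
  exact ⟨csInf_mem_closure hA hA', csSup_mem_closure hB hB'⟩

lemma IsMessageSystem.sInf_lt_five_mul_sSup (hM : IsMessageSystem 2 b M) (hb : 0 < b)
    (hb1 : b < 1) : sInf (eventualUpperBounds M) < 5 * sSup (eventualLowerBounds M) := by
  have hA := hM.one_mem_eventualUpperBounds
  have hB := hM.zero_mem_eventualLowerBounds
  have hbddA := hM.bddBelow_eventualUpperBounds
  have hbddB := hM.bddAbove_eventualLowerBounds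
  have hU1 := csInf_le hbddA hA
  have hU0 := le_csInf ⟨1, hA⟩ fun u hu => (by norm_num : (0 : ℝ) ≤ 1 / 3).trans (hM.third_le hu)
  have hL0 := le_csSup hbddB hB
  have hclosure := csInf_prodMk_csSup_mem_closure ⟨1, hA⟩ hbddA ⟨0, hB⟩ hbddB
  set U := sInf (eventualUpperBounds M)
  set L := sSup (eventualLowerBounds M)
  have hdenomU := fU_denom_pos hb.le hb1 hU1 (add_nonneg hU0 hL0)
  have hdenomL := fL_denom_pos (l := L) hb.le hb1 hU1
  have hfU : U ≤ fU 2 (1 - b) U L := by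
    refine ContinuousWithinAt.closure_le (f := fun _ => U) (g := fun z => fU 2 (1 - b) z.1 z.2)
      hclosure continuousWithinAt_const ?_ fun z hz =>
        csInf_le hbddA (hM.fU_mem_eventualUpperBounds hb.le hb1 hz.1 hz.2)
    simp only [fU_two, sub_sub_cancel]
    exact ContinuousWithinAt.div (by fun_prop) (by fun_prop) hdenomU.ne'
  have hfL : fL 2 (1 - b) U L ≤ L := by
    refine ContinuousWithinAt.closure_le (f := fun z => fL 2 (1 - b) z.1 z.2) (g := fun _ => L)
      hclosure ?_ continuousWithinAt_const fun z hz =>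
        le_csSup hbddB (hM.fL_mem_eventualLowerBounds hb.le hb1 hz.1 hz.2)
    simp only [fL, sub_sub_cancel]
    exact ContinuousWithinAt.div (by fun_prop) (by fun_prop) hdenomL.ne'
  rw [fU_two, sub_sub_cancel, le_div_iff₀ hdenomU] at hfU
  rw [fL, sub_sub_cancel, div_le_iff₀ hdenomL] at hfL
  exact lt_five_mul_of_fixed hb hb1 hU0 hU1 hL0 hfU hfL

lemma IsMessageSystem.eventually_balanced_two (hM : IsMessageSystem 2 b M) (hb : 0 < b)
    (hb1 : b < 1) : ∀ᶠ n in atTop, ∀ p ∈ M n, Balanced (2 / 3) p := by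
  have h := hM.sInf_lt_five_mul_sSup hb hb1
  obtain ⟨l, hl, hlU⟩ := exists_lt_of_lt_csSup ⟨0, hM.zero_mem_eventualLowerBounds⟩
    (show sInf (eventualUpperBounds M) / 5 < _ by linarith)
  obtain ⟨u, hu, hul⟩ := exists_lt_of_csInf_lt ⟨1, hM.one_mem_eventualUpperBounds⟩
    (show _ < 5 * l by linarith)
  filter_upwards [hu.2, hl.2] with n hpu hlp p hp i j
  linarith [hpu p hp i, hlp p hp j]

end EventualBounds

end BinaryTree

section Uniqueness

variable {d : ℕ} {β : ℝ}

lemma Balanced.abs_sub_third_le {p : Fin 3 → ℝ} {T : ℝ} (h : Balanced T p)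
    (hp : p ∈ stdSimplex ℝ (Fin 3)) (hT : 0 ≤ T) (c : Fin 3) : |p c - 1 / 3| ≤ 2 * T := by
  have hdiff (i j : Fin 3) : p i - p j ≤ 2 * T := by
    have hle (i : Fin 3) : p i ≤ 1 := (mem_Icc_of_mem_stdSimplex hp i).2
    linarith [h i j, mul_le_mul_of_nonneg_left (add_le_add (hle i) (hle j)) hT]
  have hsum := hp.2
  rw [Fin.sum_univ_three] at hsum
  rw [abs_le]
  constructor
  · linarith [hdiff 0 c, hdiff 1 c, hdiff 2 c]
  · linarith [hdiff c 0, hdiff c 1, hdiff c 2]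

lemma isMessageSystem_condRootProb {q : ℕ} [NeZero q] (d : ℕ) (hβ : 0 < β) :
    IsMessageSystem d (1 - β) fun n => Set.range (condRootProb q d n β) where
  nonempty n := Set.range_nonempty _
  mem_stdSimplex := by
    rintro n _ ⟨τ, rfl⟩
    exact condRootProb_mem_stdSimplex hβ τ
  exists_eq_normMessage := by
    rintro n _ ⟨τ, rfl⟩
    exact ⟨_, fun j => ⟨subBoundary τ j, rfl⟩, condRootProb_succ hβ τ⟩

lemma eventually_balanced_condRootProb_two {ε : ℝ} (hβ : 0 < β) (hβ1 : β < 1) (hε : 0 < ε) :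
    ∀ᶠ n in atTop, ∀ p ∈ Set.range (condRootProb 3 2 n β), Balanced ε p := by
  have hM := isMessageSystem_condRootProb (q := 3) 2 hβ
  exact hM.eventually_balanced isContraction_two le_rfl (by linarith) (by norm_num; linarith)
    (by linarith) (by norm_num) (by norm_num)
    (hM.eventually_balanced_two (by linarith) (by linarith)) hε

lemma exists_isContraction {T₀ : ℝ} (hd : 3 ≤ d) (hT₀ : T₀ < 1) :
    ∃ s, IsContraction d T₀ s := by
  rcases hd.eq_or_lt with rfl | hd
  · exact ⟨_, isContraction_three hT₀⟩
  · exact ⟨_, isContraction_of_four_le hd hT₀⟩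

lemma pos_of_sub_two_div_le (hd : 3 ≤ d) (hβ : ((d : ℝ) - 2) / (d + 1) ≤ β) : 0 < β := by
  have hd' : (3 : ℝ) ≤ d := Nat.ofNat_le_cast.2 hd
  exact (div_pos (by linarith) (by linarith)).trans_le hβ

lemma eventually_balanced_condRootProb {ε : ℝ} (hd : 3 ≤ d) (hβ : ((d : ℝ) - 2) / (d + 1) ≤ β)
    (hβ1 : β < 1) (hε : 0 < ε) :
    ∀ᶠ n in atTop, ∀ p ∈ Set.range (condRootProb 3 d n β), Balanced ε p := by
  have hβ0 := pos_of_sub_two_div_le hd hβ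
  have hthreshold : 1 - β ≤ 3 / (d + 1) := by
    rw [div_le_iff₀ (by positivity)] at hβ
    rw [le_div_iff₀ (by positivity)]
    linarith
  have hM := isMessageSystem_condRootProb (q := 3) d hβ0
  obtain ⟨T₀, hT₀, hT₀1, hbal⟩ := hM.exists_eventually_balanced (by linarith) (by linarith)
  obtain ⟨s, hs⟩ := exists_isContraction hd hT₀1
  exact hM.eventually_balanced hs (by omega) (by linarith) hthreshold (by linarith) hT₀ hT₀1.le
    hbal hε

lemma tendsto_iSup_abs_condRootProb_sub (hβ : 0 < β)
    (h : ∀ ε > 0, ∀ᶠ n in atTop, ∀ p ∈ Set.range (condRootProb 3 d n β), Balanced ε p)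
    (c : Fin 3) :
    Tendsto (fun n => ⨆ τ, |condRootProb 3 d n β τ c - 1 / 3|) atTop (nhds 0) := by
  refine Metric.tendsto_nhds.2 fun ε hε => ?_
  filter_upwards [h (ε / 4) (by positivity)] with n hn
  rw [Real.dist_0_eq_abs, abs_of_nonneg (Real.iSup_nonneg fun _ => abs_nonneg _)]
  refine (ciSup_le fun τ => ?_).trans_lt (half_lt_self hε)
  linarith [(hn _ ⟨τ, rfl⟩).abs_sub_third_le (condRootProb_mem_stdSimplex hβ τ) (by positivity) c]

end Uniqueness

end PottsTree

/-- **Uniqueness for the 3-state antiferromagnetic Potts model on the `d`-ary tree.**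
When `d ≥ 3` and `β ∈ [(d-2)/(d+1), 1)`, and when `d = 2` and `β ∈ (0,1)`,
for every colour `c ∈ [3]` the limsup over `n` of the maximal deviation of the conditional
root marginal from `1/3` (over boundary configurations `τ`) is `0`. -/
theorem potts_q3_uniqueness (d : ℕ) (β : ℝ)
    (h : (d = 2 ∧ 0 < β ∧ β < 1) ∨
      (3 ≤ d ∧ ((d : ℝ) - 2) / ((d : ℝ) + 1) ≤ β ∧ β < 1)) :
    ∀ c : Fin 3,
      Filter.limsup
        (fun n : ℕ =>
          ⨆ τ : (Fin n → Fin d) → Fin 3, |condRootProb 3 d n β τ c - 1 / 3|)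
        Filter.atTop = 0 := by
  intro c
  refine Tendsto.limsup_eq ?_
  rcases h with ⟨rfl, hβ, hβ1⟩ | ⟨hd, hβ, hβ1⟩
  · exact PottsTree.tendsto_iSup_abs_condRootProb_sub hβ
      (fun _ => PottsTree.eventually_balanced_condRootProb_two hβ hβ1) c
  · exact PottsTree.tendsto_iSup_abs_condRootProb_sub (PottsTree.pos_of_sub_two_div_le hd hβ)
      (fun _ => PottsTree.eventually_balanced_condRootProb hd hβ hβ1) c
end

section
/- Let d ≥ 23 be an integer and set β_*(d) = 1 − 3/(d+1). Then there is no pair of real numbers (x,y) satisfying x ≥ (157/80)·y ≥ 0 and 2x + y ≥ 1 ≥ 2y + x which solves the system of equations f_u(d,β_*(d),x,y) = x and f_ℓ(d,β_*(d),x,y) = y. -/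
open Filter

/-!
Write `x = (1 + s) / 3` and `y = (1 - t) / 3`. At `β = 1 - 3 / (d + 1)` the two equations become
`2 (1 + s) ((d - s) (d + s - t)) ^ (d / 2) = (2 - s) (d + t) ^ d` and
`(1 - t) ((d + t) ^ d + (d + s - t) ^ d) = (2 + t) (d - s) ^ d`, which for `d → ∞` tend to
`2 (1 + s) = (2 - s) exp (3 t / 2)` and `(1 - t) (exp (s + t) + exp (2 s - t)) = 2 + t`.
The first equation forces `s` to lie below an explicit cubic in `t` (for `s ≤ 0` and for `s > 2 t`
crude comparisons of its two sides already exclude equality); substituting the cubic in the second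
leaves a strict inequality in `t` alone, valid for `t ≥ 79 / 250`. The condition
`x ≥ (157 / 80) y`, combined with the cubic bound, excludes smaller `t`. Both inequalities leave
room for the errors of order `1 / d` made in passing to the limit, as soon as `d ≥ 23`.
-/

open Real

section Powers

variable {d : ℕ} {p q w : ℝ}

lemma pow_le_pow_mul_exp_of_le_mul_exp_div (hd : d ≠ 0) (hp : 0 ≤ p) (h : p ≤ q * exp (w / d)) :
    p ^ d ≤ q ^ d * exp w := by
  calc p ^ d ≤ (q * exp (w / d)) ^ d := pow_le_pow_left₀ hp h d
    _ = q ^ d * exp w := by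
      rw [mul_pow, ← exp_nat_mul, mul_div_cancel₀ w (Nat.cast_ne_zero.2 hd)]

lemma pow_le_sqrt_pow_mul_exp_of_sq_le (hd : d ≠ 0) (hp : 0 ≤ p)
    (h : p ^ 2 ≤ q * exp (2 * w / d)) : p ^ d ≤ √q ^ d * exp w := by
  refine pow_le_pow_mul_exp_of_le_mul_exp_div hd hp ?_
  calc p ≤ √(q * exp (2 * w / d)) := le_sqrt_of_sq_le h
    _ = √q * exp (w / d) := by
      rw [sqrt_mul' _ (exp_pos _).le, ← exp_half]
      congr 2
      ring

end Powers

section FiniteDegree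

lemma add_le_sub_two_mul_mul_exp_div {D t : ℝ} (hD : 23 ≤ D) (ht : 0 ≤ t) (ht1 : t ≤ 1) :
    D + t ≤ (D - 2 * t) * exp ((3 * t + 37 / 500 * t ^ 2) / D) := by
  have hD0 : 0 < D := by linarith
  set v := t / D with hv
  have hv0 : 0 ≤ v := by positivity
  have hv1 : 0 ≤ 1 / 23 - v := by
    rw [sub_nonneg, hv, div_le_div_iff₀ hD0 (by norm_num)]
    linarith
  have htD : t = D * v := by rw [hv, mul_div_cancel₀ t hD0.ne']
  have hexponent : 3 * v + 17 / 10 * v ^ 2 ≤ (3 * t + 37 / 500 * t ^ 2) / D := by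
    rw [le_div_iff₀ hD0, htD]
    nlinarith [mul_nonneg (mul_nonneg hD0.le (sq_nonneg v)) (sub_nonneg.2 hD),
      mul_nonneg hD0.le (sq_nonneg v)]
  have hunit : 1 + v ≤ (1 - 2 * v) * exp (3 * v + 17 / 10 * v ^ 2) := by
    have htaylor {w : ℝ} (hw : 0 ≤ w) : 1 + w + w ^ 2 / 2 + w ^ 3 / 6 ≤ exp w := by
      simpa [Finset.sum_range_succ, Nat.factorial] using sum_le_exp_of_nonneg hw 4
    refine le_trans ?_ (mul_le_mul_of_nonneg_left (htaylor (by positivity)) (by linarith))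
    nlinarith [pow_nonneg hv0 2, pow_nonneg hv0 3, mul_nonneg (pow_nonneg hv0 2) hv1,
      mul_nonneg (pow_nonneg hv0 3) hv1, mul_nonneg (pow_nonneg hv0 4) hv1,
      mul_nonneg (pow_nonneg hv0 5) hv1, mul_nonneg (pow_nonneg hv0 6) hv1]
  calc D + t = D * (1 + v) := by rw [htD]; ring
    _ ≤ D * ((1 - 2 * v) * exp (3 * v + 17 / 10 * v ^ 2)) := by gcongr
    _ = (D - 2 * t) * exp (3 * v + 17 / 10 * v ^ 2) := by rw [htD]; ring
    _ ≤ (D - 2 * t) * exp ((3 * t + 37 / 500 * t ^ 2) / D) := by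
      gcongr
      linarith

lemma le_sub_mul_exp_div {D s : ℝ} (hD : 23 ≤ D) (hs : 0 ≤ s) (hs2 : s ≤ 2) :
    D ≤ (D - s) * exp ((s + 3 / 125 * s ^ 2) / D) := by
  have hD0 : 0 < D := by linarith
  set u := s / D with hu
  have hu0 : 0 ≤ u := by positivity
  have hu1 : 0 ≤ 2 / 23 - u := by
    rw [sub_nonneg, hu, div_le_div_iff₀ hD0 (by norm_num)]
    linarith
  have hsD : s = D * u := by rw [hu, mul_div_cancel₀ s hD0.ne']
  have hexponent : u + 11 / 20 * u ^ 2 ≤ (s + 3 / 125 * s ^ 2) / D := by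
    rw [le_div_iff₀ hD0, hsD]
    nlinarith [mul_nonneg (mul_nonneg hD0.le (sq_nonneg u)) (sub_nonneg.2 hD),
      mul_nonneg hD0.le (sq_nonneg u)]
  have hunit : 1 ≤ (1 - u) * exp (u + 11 / 20 * u ^ 2) := by
    refine le_trans ?_
      (mul_le_mul_of_nonneg_left (quadratic_le_exp_of_nonneg (by positivity)) (by linarith))
    nlinarith [pow_nonneg hu0 2, mul_nonneg (pow_nonneg hu0 2) hu1,
      mul_nonneg (pow_nonneg hu0 3) hu1, mul_nonneg (pow_nonneg hu0 4) hu1]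
  calc D ≤ D * ((1 - u) * exp (u + 11 / 20 * u ^ 2)) := le_mul_of_one_le_right hD0.le hunit
    _ = (D - s) * exp (u + 11 / 20 * u ^ 2) := by rw [hsD]; ring
    _ ≤ (D - s) * exp ((s + 3 / 125 * s ^ 2) / D) := by
      gcongr
      linarith

lemma add_pow_le_sub_pow_mul_exp {d : ℕ} {s r : ℝ} (hd : 23 ≤ d) (hs : 0 ≤ s) (hs2 : s ≤ 2)
    (hr : 0 ≤ (d : ℝ) + r) :
    ((d : ℝ) + r) ^ d ≤ ((d : ℝ) - s) ^ d * exp (r + s + 3 / 125 * s ^ 2) := by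
  have hD : (23 : ℝ) ≤ d := by exact_mod_cast hd
  refine pow_le_pow_mul_exp_of_le_mul_exp_div (by lia) hr ?_
  calc (d : ℝ) + r = d * (r / d + 1) := by field_simp; ring
    _ ≤ d * exp (r / d) := by gcongr; exact add_one_le_exp _
    _ ≤ (d - s) * exp ((s + 3 / 125 * s ^ 2) / d) * exp (r / d) := by
      gcongr
      exact le_sub_mul_exp_div hD hs hs2
    _ = (d - s) * exp ((r + s + 3 / 125 * s ^ 2) / d) := by
      rw [mul_assoc, ← exp_add]
      ring_nf

end FiniteDegree

section Barrier

/-- An upper bound, for `t ∈ [0, 1]`, for the solution `s` of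
`2 (1 + s) = (2 - s) exp (3 t / 2 + 37 t² / 1000)`, the limiting first equation with its error
term. That solution starts as `t + (1 / 4 + 37 / 1500) t²`; the coefficient `7 / 25` is a little
larger, and the cubic term limits the loss for larger `t`. -/
noncomputable def barrier (t : ℝ) : ℝ := t + 7 / 25 * t ^ 2 - 3 / 25 * t ^ 3

variable {t : ℝ}

lemma hasDerivAt_barrier (t : ℝ) : HasDerivAt barrier (1 + 14 / 25 * t - 9 / 25 * t ^ 2) t := by
  refine (((hasDerivAt_id' t).add ((hasDerivAt_pow 2 t).const_mul (7 / 25))).sub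
    ((hasDerivAt_pow 3 t).const_mul (3 / 25))).congr_deriv ?_
  norm_num
  ring

lemma barrier_nonneg (ht : 0 ≤ t) (ht1 : t ≤ 1) : 0 ≤ barrier t := by
  have hcube : t ^ 3 ≤ t := pow_le_of_le_one ht ht1 three_ne_zero
  rw [barrier]
  nlinarith [sq_nonneg t]

lemma barrier_le (ht : 0 ≤ t) (ht1 : t ≤ 1) : barrier t ≤ 29 / 25 * t := by
  have h : 0 ≤ t * (1 - t) := mul_nonneg ht (by linarith)
  rw [barrier]
  nlinarith [mul_nonneg h (by linarith : 0 ≤ 4 - 3 * t)]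

lemma le_of_mul_one_sub_le_one_add_barrier (ht : 0 ≤ t)
    (h : 157 / 80 * (1 - t) ≤ 1 + barrier t) : 79 / 250 ≤ t := by
  by_contra! hlt
  rw [barrier] at h
  nlinarith [mul_nonneg ht ht, mul_nonneg ht (sub_nonneg.2 hlt.le), pow_nonneg ht 3]

lemma le_deriv_log_one_add_barrier_sub_log (ht : 0 ≤ t) (ht1 : t ≤ 1) :
    3 / 2 + 37 / 500 * t ≤ (1 + 14 / 25 * t - 9 / 25 * t ^ 2) / (1 + barrier t) +
      (1 + 14 / 25 * t - 9 / 25 * t ^ 2) / (2 - barrier t) := by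
  have hlow := barrier_nonneg ht ht1
  have hupp := barrier_le ht ht1
  have h₁ : 0 < 1 + barrier t := by linarith
  have h₂ : 0 < 2 - barrier t := by linarith
  rw [div_add_div _ _ h₁.ne' h₂.ne', le_div_iff₀ (mul_pos h₁ h₂), barrier]
  have key : 0 ≤ t * (1 - t) := mul_nonneg ht (by linarith)
  nlinarith [key, mul_nonneg ht key, mul_nonneg ht (mul_nonneg ht key), pow_nonneg ht 3,
    pow_nonneg ht 4, pow_nonneg ht 5, pow_nonneg ht 6, mul_nonneg (pow_nonneg ht 3) key,
    mul_nonneg (pow_nonneg ht 4) key, mul_nonneg (pow_nonneg ht 5) key]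

lemma monotoneOn_log_one_add_barrier_sub_log :
    MonotoneOn (fun t ↦ log (1 + barrier t) - log (2 - barrier t) -
      (3 / 2 * t + 37 / 1000 * t ^ 2)) (Set.Icc 0 1) := by
  have hderiv : ∀ t ∈ Set.Icc (0 : ℝ) 1, HasDerivAt
      (fun t ↦ log (1 + barrier t) - log (2 - barrier t) - (3 / 2 * t + 37 / 1000 * t ^ 2))
      ((1 + 14 / 25 * t - 9 / 25 * t ^ 2) / (1 + barrier t) +
        (1 + 14 / 25 * t - 9 / 25 * t ^ 2) / (2 - barrier t) - (3 / 2 + 37 / 500 * t)) t := by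
    rintro t ⟨ht, ht1⟩
    have hlow := barrier_nonneg ht ht1
    have hupp := barrier_le ht ht1
    have h₁ : 1 + barrier t ≠ 0 := by linarith
    have h₂ : 2 - barrier t ≠ 0 := by linarith
    have hexponent := ((hasDerivAt_id' t).const_mul (3 / 2)).add
      ((hasDerivAt_pow 2 t).const_mul (37 / 1000))
    refine (((((hasDerivAt_barrier t).const_add 1).log h₁).sub
      (((hasDerivAt_barrier t).const_sub 2).log h₂)).sub hexponent).congr_deriv ?_
    norm_num
    ring
  refine monotoneOn_of_hasDerivWithinAt_nonneg (convex_Icc 0 1)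
    (fun t ht ↦ (hderiv t ht).continuousAt.continuousWithinAt)
    (fun t ht ↦ (hderiv t (interior_subset ht)).hasDerivWithinAt) fun t ht ↦ ?_
  obtain ⟨ht, ht1⟩ := interior_subset ht
  exact sub_nonneg.2 (le_deriv_log_one_add_barrier_sub_log ht ht1)

lemma exp_mul_two_sub_barrier_le (ht : 0 ≤ t) (ht1 : t ≤ 1) :
    exp (3 / 2 * t + 37 / 1000 * t ^ 2) * (2 - barrier t) ≤ 2 * (1 + barrier t) := by
  have hlow := barrier_nonneg ht ht1
  have hupp := barrier_le ht ht1
  have h₁ : 0 < 1 + barrier t := by linarith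
  have h₂ : 0 < 2 - barrier t := by linarith
  have hlog : -log 2 ≤
      log (1 + barrier t) - log (2 - barrier t) - (3 / 2 * t + 37 / 1000 * t ^ 2) := by
    simpa [barrier] using
      monotoneOn_log_one_add_barrier_sub_log (Set.left_mem_Icc.2 zero_le_one) ⟨ht, ht1⟩ ht
  rw [← le_div_iff₀ h₂, ← le_log_iff_exp_le (by positivity), log_div (by positivity) h₂.ne',
    log_mul two_ne_zero h₁.ne']
  linarith

end Barrier

section FirstEquation

variable {d : ℕ} {s t : ℝ}

lemma two_mul_one_add_mul_sqrt_pow_lt (hd : d ≠ 0) (hs : s ≤ 0) (ht : 0 < t) :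
    2 * (1 + s) * √((d - s) * (d + s - t)) ^ d < (2 - s) * ((d : ℝ) + t) ^ d := by
  have hdt : 0 < (d : ℝ) + t := by positivity
  have hsqrt : √((d - s) * (d + s - t)) < (d : ℝ) + t := by
    rw [sqrt_lt' hdt]
    nlinarith [mul_nonneg (neg_nonneg.2 hs) (by linarith : 0 ≤ t - s),
      mul_nonneg d.cast_nonneg ht.le, pow_pos ht 2]
  calc 2 * (1 + s) * √((d - s) * (d + s - t)) ^ d
      ≤ 2 * √((d - s) * (d + s - t)) ^ d := by gcongr; linarith
    _ < 2 * ((d : ℝ) + t) ^ d := by gcongr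
    _ ≤ (2 - s) * ((d : ℝ) + t) ^ d := by gcongr; linarith

lemma two_sub_mul_exp_lt (hs : 0 < s) (hs2 : s ≤ 2) : (2 - s) * exp s < 2 * (1 + s) := by
  have hhalf : (1 - s / 2) * exp (s / 2) < 1 := by
    rw [← lt_div_iff₀ (exp_pos _), one_div, ← exp_neg]
    linarith [add_one_lt_exp (x := -(s / 2)) (by linarith)]
  have hquad : exp (s / 2) ≤ 1 + s := by
    have h := (abs_le.1 (abs_exp_sub_one_sub_id_le
      (abs_le.2 ⟨by linarith, by linarith⟩ : |s / 2| ≤ 1))).2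
    nlinarith
  calc (2 - s) * exp s = 2 * ((1 - s / 2) * exp (s / 2) * exp (s / 2)) := by
        rw [mul_assoc, ← exp_add, add_halves]; ring
    _ < 2 * (1 * exp (s / 2)) := by gcongr
    _ ≤ 2 * (1 + s) := by linarith

lemma two_sub_mul_pow_lt_of_two_mul_lt (hd : 8 ≤ d) (hdt : 0 ≤ (d : ℝ) + t) (hs : 0 < s)
    (hs2 : s ≤ 2) (hst : 2 * t < s) :
    (2 - s) * ((d : ℝ) + t) ^ d < 2 * (1 + s) * √((d - s) * (d + s - t)) ^ d := by
  have hD : (8 : ℝ) ≤ d := by exact_mod_cast hd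
  have hA : 0 < (d : ℝ) - s := by linarith
  have hC : 0 < (d : ℝ) + s - t := by linarith
  have hbase : (d : ℝ) + t ≤ (d - s) * exp (2 * s / d) := by
    have hlin : (d : ℝ) + s / 2 ≤ (d - s) * (2 * s / d + 1) := by
      have hfrac : s * (2 * s / d) ≤ s / 2 := by
        rw [mul_div_assoc', div_le_iff₀ (by linarith)]
        nlinarith
      have hcancel : (d : ℝ) * (2 * s / d) = 2 * s := by field_simp
      linarith
    calc (d : ℝ) + t ≤ d + s / 2 := by linarith
      _ ≤ (d - s) * (2 * s / d + 1) := hlin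
      _ ≤ (d - s) * exp (2 * s / d) := by gcongr; exact add_one_le_exp _
  have hpow : ((d : ℝ) + t) ^ d ≤ √((d - s) * (d + s - t)) ^ d * exp s := by
    refine pow_le_sqrt_pow_mul_exp_of_sq_le (by lia) hdt ?_
    calc ((d : ℝ) + t) ^ 2 = (d + t) * (d + t) := sq _
      _ ≤ (d - s) * exp (2 * s / d) * (d + s - t) :=
        mul_le_mul hbase (by linarith) hdt (by positivity)
      _ = (d - s) * (d + s - t) * exp (2 * s / d) := by ring
  calc (2 - s) * ((d : ℝ) + t) ^ d
      ≤ (2 - s) * (√((d - s) * (d + s - t)) ^ d * exp s) := by gcongr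
    _ = (2 - s) * exp s * √((d - s) * (d + s - t)) ^ d := by ring
    _ < 2 * (1 + s) * √((d - s) * (d + s - t)) ^ d :=
      mul_lt_mul_of_pos_right (two_sub_mul_exp_lt hs hs2)
        (pow_pos (sqrt_pos.2 (mul_pos hA hC)) d)

lemma add_pow_le_sqrt_pow_mul_exp (hd : 23 ≤ d) (ht : 0 ≤ t) (ht1 : t ≤ 1) (hs : 0 ≤ s)
    (hst : s ≤ 2 * t) :
    ((d : ℝ) + t) ^ d ≤
      √((d - s) * (d + s - t)) ^ d * exp (3 / 2 * t + 37 / 1000 * t ^ 2) := by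
  have hD : (23 : ℝ) ≤ d := by exact_mod_cast hd
  refine pow_le_sqrt_pow_mul_exp_of_sq_le (by lia) (by positivity) ?_
  have hprod : ((d : ℝ) + t) * (d - 2 * t) ≤ (d - s) * (d + s - t) := by
    nlinarith [mul_nonneg (sub_nonneg.2 hst) (add_nonneg hs ht)]
  calc ((d : ℝ) + t) ^ 2 = (d + t) * (d + t) := sq _
    _ ≤ (d + t) * ((d - 2 * t) * exp ((3 * t + 37 / 500 * t ^ 2) / d)) := by
      gcongr
      exact add_le_sub_two_mul_mul_exp_div hD ht ht1
    _ = (d + t) * (d - 2 * t) * exp (2 * (3 / 2 * t + 37 / 1000 * t ^ 2) / d) := by ring_nf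
    _ ≤ (d - s) * (d + s - t) * exp (2 * (3 / 2 * t + 37 / 1000 * t ^ 2) / d) := by gcongr

lemma two_sub_mul_pow_lt_of_barrier_lt (hd : 23 ≤ d) (ht : 0 ≤ t) (ht1 : t ≤ 1)
    (hbar : barrier t < s) (hst : s ≤ 2 * t) :
    (2 - s) * ((d : ℝ) + t) ^ d < 2 * (1 + s) * √((d - s) * (d + s - t)) ^ d := by
  have hD : (23 : ℝ) ≤ d := by exact_mod_cast hd
  have hs : 0 ≤ s := (barrier_nonneg ht ht1).trans hbar.le
  have hA : 0 < (d : ℝ) - s := by linarith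
  have hC : 0 < (d : ℝ) + s - t := by linarith
  set w := 3 / 2 * t + 37 / 1000 * t ^ 2
  calc (2 - s) * ((d : ℝ) + t) ^ d
      ≤ (2 - s) * (√((d - s) * (d + s - t)) ^ d * exp w) := by
        gcongr
        · linarith
        · exact add_pow_le_sqrt_pow_mul_exp hd ht ht1 hs hst
    _ ≤ exp w * (2 - barrier t) * √((d - s) * (d + s - t)) ^ d := by
      rw [mul_left_comm, mul_comm, mul_comm (exp w)]
      gcongr
    _ ≤ 2 * (1 + barrier t) * √((d - s) * (d + s - t)) ^ d :=
      mul_le_mul_of_nonneg_right (exp_mul_two_sub_barrier_le ht ht1) (by positivity)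
    _ < 2 * (1 + s) * √((d - s) * (d + s - t)) ^ d := by gcongr

lemma nonneg_and_le_barrier_of_eq (hd : 23 ≤ d) (ht1 : t ≤ 1) (hs : 0 < s) (hst : s ≤ 1 + t)
    (heq : 2 * (1 + s) * √((d - s) * (d + s - t)) ^ d = (2 - s) * ((d : ℝ) + t) ^ d) :
    0 ≤ t ∧ s ≤ barrier t := by
  have hD : (23 : ℝ) ≤ d := by exact_mod_cast hd
  have hs_le : s ≤ 2 * t := by
    by_contra! hlt
    exact (two_sub_mul_pow_lt_of_two_mul_lt (by lia) (by linarith) hs (by linarith) hlt).ne'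
      heq
  have ht : 0 ≤ t := by linarith
  refine ⟨ht, ?_⟩
  by_contra! hlt
  exact (two_sub_mul_pow_lt_of_barrier_lt hd ht ht1 hlt hs_le).ne' heq

end FirstEquation

section SecondEquation

/-- The exponent bounding `((d + t) / (d - s)) ^ d` for `s ≤ barrier t`: the limit `t + s` with
`s` replaced by its bound, plus a term for the error at finite `d`. -/
noncomputable def addExponent (t : ℝ) : ℝ := t + barrier t + 33 / 1000 * t ^ 2

/-- The exponent bounding `((d + s - t) / (d - s)) ^ d` for `s ≤ barrier t`: the limit `2 s - t`
with `s` replaced by its bound, plus a term for the error at finite `d`. -/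
noncomputable def subExponent (t : ℝ) : ℝ := 2 * barrier t - t + 33 / 1000 * t ^ 2

variable {t : ℝ}

lemma hasDerivAt_addExponent (t : ℝ) :
    HasDerivAt addExponent (2 + 313 / 500 * t - 9 / 25 * t ^ 2) t := by
  refine (((hasDerivAt_id' t).add (hasDerivAt_barrier t)).add
    ((hasDerivAt_pow 2 t).const_mul (33 / 1000))).congr_deriv ?_
  norm_num
  ring

lemma hasDerivAt_subExponent (t : ℝ) :
    HasDerivAt subExponent (1 + 593 / 500 * t - 18 / 25 * t ^ 2) t := by
  refine ((((hasDerivAt_barrier t).const_mul 2).sub (hasDerivAt_id' t)).add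
    ((hasDerivAt_pow 2 t).const_mul (33 / 1000))).congr_deriv ?_
  norm_num
  ring

lemma le_exp_neg_two_thirds : 51 / 100 ≤ exp (-(2 / 3)) := by
  rw [exp_neg, le_inv_comm₀ (by norm_num) (exp_pos _)]
  refine (exp_bound' (n := 6) (by norm_num) (by norm_num) (by norm_num)).trans ?_
  norm_num [Finset.sum_range_succ, Nat.factorial]

lemma one_sub_mul_deriv_addExponent_sub_one_le (ht : 79 / 250 ≤ t) (ht1 : t ≤ 1) :
    (1 - t) * (2 + 313 / 500 * t - 9 / 25 * t ^ 2) - 1 ≤ exp (-addExponent t) := by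
  have hpoly : (1 - t) * (2 + 313 / 500 * t - 9 / 25 * t ^ 2) - 1 ≤
      51 / 100 * (5 / 3 - addExponent t) := by
    rw [addExponent, barrier]
    nlinarith [mul_nonneg (sub_nonneg.2 ht) (sub_nonneg.2 ht1)]
  refine hpoly.trans ?_
  -- The tangent line of `exp (-u)` at `u = 2 / 3` is `exp (-(2 / 3)) * (5 / 3 - u)`.
  rcases le_total (addExponent t) (5 / 3) with hle | hge
  · calc 51 / 100 * (5 / 3 - addExponent t)
        ≤ exp (-(2 / 3)) * exp (2 / 3 - addExponent t) :=
          mul_le_mul le_exp_neg_two_thirds (by linarith [add_one_le_exp (2 / 3 - addExponent t)])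
            (by linarith) (exp_pos _).le
      _ = exp (-addExponent t) := by rw [← exp_add]; ring_nf
  · linarith [exp_pos (-addExponent t)]

lemma monotoneOn_two_add_sub_one_sub_mul_exp_add_exp :
    MonotoneOn (fun t ↦ 2 + t - (1 - t) * (exp (addExponent t) + exp (subExponent t)))
      (Set.Icc (79 / 250) 1) := by
  have hderiv : ∀ t : ℝ, HasDerivAt
      (fun t ↦ 2 + t - (1 - t) * (exp (addExponent t) + exp (subExponent t)))
      (1 - exp (addExponent t) * ((1 - t) * (2 + 313 / 500 * t - 9 / 25 * t ^ 2) - 1) +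
        exp (subExponent t) * (1 - (1 - t) * (1 + 593 / 500 * t - 18 / 25 * t ^ 2))) t := by
    intro t
    refine (((hasDerivAt_id' t).const_add 2).sub (((hasDerivAt_id' t).const_sub 1).mul
      ((hasDerivAt_addExponent t).exp.add (hasDerivAt_subExponent t).exp))).congr_deriv ?_
    rw [Pi.add_apply]
    ring
  refine monotoneOn_of_hasDerivWithinAt_nonneg (convex_Icc _ _)
    (fun t _ ↦ (hderiv t).continuousAt.continuousWithinAt)
    (fun t _ ↦ (hderiv t).hasDerivWithinAt) fun t ht ↦ ?_
  obtain ⟨ht, ht1⟩ := interior_subset ht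
  have hadd : exp (addExponent t) * ((1 - t) * (2 + 313 / 500 * t - 9 / 25 * t ^ 2) - 1) ≤ 1 :=
    calc exp (addExponent t) * ((1 - t) * (2 + 313 / 500 * t - 9 / 25 * t ^ 2) - 1)
        ≤ exp (addExponent t) * exp (-addExponent t) := by
          gcongr
          exact one_sub_mul_deriv_addExponent_sub_one_le ht ht1
      _ = 1 := by rw [← exp_add, add_neg_cancel, exp_zero]
  have hsub : 0 ≤ 1 - (1 - t) * (1 + 593 / 500 * t - 18 / 25 * t ^ 2) := by
    nlinarith [mul_nonneg (sub_nonneg.2 ht) (sub_nonneg.2 ht1)]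
  exact add_nonneg (sub_nonneg.2 hadd) (mul_nonneg (exp_pos _).le hsub)

lemma exp_addExponent_left_endpoint_le : exp (addExponent (79 / 250)) ≤ 967 / 500 := by
  refine (exp_bound' (n := 7) ?_ ?_ (by norm_num)).trans ?_ <;>
    norm_num [addExponent, barrier, Finset.sum_range_succ, Nat.factorial]

lemma exp_subExponent_left_endpoint_le : exp (subExponent (79 / 250)) ≤ 289 / 200 := by
  refine (exp_bound' (n := 7) ?_ ?_ (by norm_num)).trans ?_ <;>
    norm_num [subExponent, barrier, Finset.sum_range_succ, Nat.factorial]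

lemma one_sub_mul_exp_add_exp_lt (ht : 79 / 250 ≤ t) (ht1 : t ≤ 1) :
    (1 - t) * (exp (addExponent t) + exp (subExponent t)) < 2 + t := by
  have hmono := monotoneOn_two_add_sub_one_sub_mul_exp_add_exp
    (Set.left_mem_Icc.2 (by norm_num)) ⟨ht, ht1⟩ ht
  dsimp only at hmono
  linarith [exp_addExponent_left_endpoint_le, exp_subExponent_left_endpoint_le]

lemma one_sub_mul_pow_add_pow_lt {d : ℕ} {s : ℝ} (hd : 23 ≤ d) (ht : 79 / 250 ≤ t) (ht1 : t ≤ 1)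
    (hs : 0 ≤ s) (hbar : s ≤ barrier t) :
    (1 - t) * (((d : ℝ) + t) ^ d + (d + s - t) ^ d) < (2 + t) * ((d : ℝ) - s) ^ d := by
  have hD : (23 : ℝ) ≤ d := by exact_mod_cast hd
  have hst : s ≤ 29 / 25 * t := hbar.trans (barrier_le (by linarith) ht1)
  have herror : 3 / 125 * s ^ 2 ≤ 33 / 1000 * t ^ 2 := by
    nlinarith [pow_le_pow_left₀ hs hst 2]
  have hpow : 0 < ((d : ℝ) - s) ^ d := pow_pos (by linarith) d
  have hadd : ((d : ℝ) + t) ^ d ≤ ((d : ℝ) - s) ^ d * exp (addExponent t) := by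
    refine (add_pow_le_sub_pow_mul_exp hd hs (by linarith) (by linarith)).trans ?_
    gcongr
    rw [addExponent]
    linarith
  have hsub : ((d : ℝ) + s - t) ^ d ≤ ((d : ℝ) - s) ^ d * exp (subExponent t) := by
    rw [add_sub_assoc]
    refine (add_pow_le_sub_pow_mul_exp hd hs (by linarith) (by linarith)).trans ?_
    gcongr
    rw [subExponent]
    linarith
  calc (1 - t) * (((d : ℝ) + t) ^ d + (d + s - t) ^ d)
      ≤ (1 - t) * (((d : ℝ) - s) ^ d * exp (addExponent t) +
          ((d : ℝ) - s) ^ d * exp (subExponent t)) := by gcongr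
    _ = (1 - t) * (exp (addExponent t) + exp (subExponent t)) * ((d : ℝ) - s) ^ d := by ring
    _ < (2 + t) * ((d : ℝ) - s) ^ d :=
      mul_lt_mul_of_pos_right (one_sub_mul_exp_add_exp_lt ht ht1) hpow

end SecondEquation

section ShiftedCoordinates

variable {d : ℕ} {s t : ℝ}

lemma one_sub_mul_eq_div_of_add_eq {u c : ℝ} (h : c + 3 * u = d + 1) :
    1 - (1 - (1 - 3 / ((d : ℝ) + 1))) * u = c / (d + 1) := by
  field_simp
  linarith

lemma fU_shifted (hs : s ≤ d) (hst : 0 ≤ d + s - t) :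
    fU d (1 - 3 / ((d : ℝ) + 1)) ((1 + s) / 3) ((1 - t) / 3) =
      ((d : ℝ) + t) ^ d / ((d + t) ^ d + 2 * √((d - s) * (d + s - t)) ^ d) := by
  have hd1 : (0 : ℝ) < d + 1 := by positivity
  have hA : 0 ≤ ((d : ℝ) - s) / (d + 1) := div_nonneg (sub_nonneg.2 hs) hd1.le
  have hC : 0 ≤ ((d : ℝ) + s - t) / (d + 1) := div_nonneg hst hd1.le
  have hsqrt : √((d - s) / (d + 1)) * √((d + s - t) / (d + 1)) =
      √((d - s) * (d + s - t)) / (d + 1) := by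
    rw [← sqrt_mul hA, div_mul_div_comm, sqrt_div' _ (by positivity), sqrt_mul_self hd1.le]
  rw [fU, one_sub_mul_eq_div_of_add_eq (c := d + t) (by ring),
    one_sub_mul_eq_div_of_add_eq (c := d - s) (by ring),
    one_sub_mul_eq_div_of_add_eq (c := d + s - t) (by ring),
    rpow_div_two_eq_sqrt _ hA, rpow_div_two_eq_sqrt _ hC, rpow_natCast, rpow_natCast, mul_assoc,
    ← mul_pow, hsqrt, div_pow, div_pow, ← mul_div_assoc, ← add_div,
    div_div_div_cancel_right₀ (pow_pos hd1 d).ne']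

lemma fL_shifted (d : ℕ) (s t : ℝ) :
    fL d (1 - 3 / ((d : ℝ) + 1)) ((1 + s) / 3) ((1 - t) / 3) =
      ((d : ℝ) - s) ^ d / ((d - s) ^ d + (d + t) ^ d + (d + s - t) ^ d) := by
  rw [fL, one_sub_mul_eq_div_of_add_eq (c := d - s) (by ring),
    one_sub_mul_eq_div_of_add_eq (c := d + t) (by ring),
    one_sub_mul_eq_div_of_add_eq (c := d + s - t) (by ring), div_pow, div_pow, div_pow,
    ← add_div, ← add_div, div_div_div_cancel_right₀ (by positivity)]

lemma fU_shifted_eq_iff (hs : s ≤ d) (ht : 0 < (d : ℝ) + t) (hst : 0 ≤ d + s - t) :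
    fU d (1 - 3 / ((d : ℝ) + 1)) ((1 + s) / 3) ((1 - t) / 3) = (1 + s) / 3 ↔
      2 * (1 + s) * √((d - s) * (d + s - t)) ^ d = (2 - s) * ((d : ℝ) + t) ^ d := by
  rw [fU_shifted hs hst, div_eq_div_iff (by positivity) three_ne_zero]
  constructor <;> intro h <;> linarith

lemma fL_shifted_eq_iff (hs : s ≤ d) (ht : 0 < (d : ℝ) + t) (hst : 0 ≤ d + s - t) :
    fL d (1 - 3 / ((d : ℝ) + 1)) ((1 + s) / 3) ((1 - t) / 3) = (1 - t) / 3 ↔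
      (1 - t) * (((d : ℝ) + t) ^ d + (d + s - t) ^ d) = (2 + t) * ((d : ℝ) - s) ^ d := by
  rw [← sub_nonneg] at hs
  rw [fL_shifted, div_eq_div_iff (by positivity) three_ne_zero]
  constructor <;> intro h <;> linarith

end ShiftedCoordinates

theorem no_fixed_point_large_d_general (d : ℕ) (hd : 23 ≤ d) :
    ¬ ∃ x y : ℝ,
        (157 / 80) * y ≤ x ∧ 0 ≤ y ∧ x + y ≤ 1 ∧
        fU d (1 - 3 / ((d : ℝ) + 1)) x y = x ∧
        fL d (1 - 3 / ((d : ℝ) + 1)) x y = y := by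
  rintro ⟨x, y, hratio, hy, hxy, hU, hL⟩
  have hD : (23 : ℝ) ≤ d := by exact_mod_cast hd
  obtain ⟨s, rfl⟩ : ∃ s, x = (1 + s) / 3 := ⟨3 * x - 1, by ring⟩
  obtain ⟨t, rfl⟩ : ∃ t, y = (1 - t) / 3 := ⟨1 - 3 * y, by ring⟩
  rw [fU_shifted_eq_iff (by linarith) (by linarith) (by linarith)] at hU
  rw [fL_shifted_eq_iff (by linarith) (by linarith) (by linarith)] at hL
  have hs : 0 < s := by
    by_contra! hs
    exact (two_mul_one_add_mul_sqrt_pow_lt (by lia) hs (by linarith)).ne hU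
  obtain ⟨ht, hbar⟩ := nonneg_and_le_barrier_of_eq hd (by linarith) hs (by linarith) hU
  have ht_low : 79 / 250 ≤ t := le_of_mul_one_sub_le_one_add_barrier ht (by linarith)
  exact (one_sub_mul_pow_add_pow_lt hd ht_low (by linarith) hs.le hbar).ne hL

/-- For every integer `d ≥ 23`, with `β_*(d) = 1 - 3/(d+1)`, there is no real
solution `(x,y)` of the system `f_u(d,β_*(d),x,y) = x`, `f_ℓ(d,β_*(d),x,y) = y`
satisfying `x ≥ (157/80)·y ≥ 0` and `2x + y ≥ 1 ≥ 2y + x`. -/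
theorem no_fixed_point_large_d (d : ℕ) (hd : 23 ≤ d) :
    ¬ ∃ x y : ℝ,
        (157 / 80) * y ≤ x ∧ 0 ≤ y ∧ 1 ≤ 2 * x + y ∧ 2 * y + x ≤ 1 ∧
        fU d (1 - 3 / ((d : ℝ) + 1)) x y = x ∧
        fL d (1 - 3 / ((d : ℝ) + 1)) x y = y := by
  rintro ⟨x, y, hratio, hy, -, hyz, hU, hL⟩
  exact no_fixed_point_large_d_general d hd ⟨x, y, hratio, hy, by linarith, hU, hL⟩
end
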